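/- arXiv:math/0103044 — 3 statements merged into one kernel-verified Lean document; each statement's English description precedes it below -/
import Mathlib

section
/- Let (S,T) be modular data on Φ, let N ≥ 1 be the exact order of T (Tᴺ = I and N minimal), and let ρ : SL₂(ℤ) → GL(Φ,ℂ) be a group homomorphism with ρ([[0,-1],[1,0]]) = S and ρ([[1,1],[0,1]]) = T. Let p ∈ {2,3} with p not dividing N. Suppose there exist a permutation g of Φ, a function ε : Φ → {1,-1}, and a ring automorphism τ of ℂ such that τ(S_{ab}) = ε(a) S_{ga,b} = ε(b) S_{a,gb} and τ(T_{aa}) = T_{aa}^p for all a, b ∈ Φ, and suppose T_{ga,ga} = T_{aa}^{p²} for all a ∈ Φ. Then ρ(A) is the identity matrix for every A ∈ SL₂(ℤ) with A ≡ I (mod N); that is, ρ factors through the principal congruence subgroup Γ(N) and hence defines a representation of SL₂(ℤ/Nℤ). -/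
open scoped BigOperators
open Complex

/-- Modular data on a finite set `Φ` with distinguished element `zero`: a unitary symmetric
matrix `S`, a diagonal matrix `T` of finite order, with the `zero`-row of `S` real and
strictly positive, `S² = (ST)³`, and nonnegative-integer fusion coefficients `N a b c` given
by Verlinde's formula. -/
structure ModularData (Φ : Type) [Fintype Φ] [DecidableEq Φ] where
  zero : Φ
  S : Matrix Φ Φ ℂ
  T : Matrix Φ Φ ℂ
  N : Φ → Φ → Φ → ℕ
  S_unitary : S * S.conjTranspose = 1
  S_symm : ∀ a b, S a b = S b a
  T_diag : ∀ a b, a ≠ b → T a b = 0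
  T_order : ∃ m : ℕ, 0 < m ∧ T ^ m = 1
  S_zero_pos : ∀ a, (S zero a).im = 0 ∧ 0 < (S zero a).re
  modular_rel : S ^ 2 = (S * T) ^ 3
  verlinde : ∀ a b c,
    (N a b c : ℂ) = ∑ d, S a d * S b d * (starRingEnd ℂ) (S c d) / S zero d


structure StData (R : Type) [CommRing R] (G : Type) [Group G] where
  t : R → G
  l : R → G
  t_add : ∀ x y, t (x + y) = t x * t y
  l_add : ∀ x y, l (x + y) = l x * l y
  wt : ∀ (v : Rˣ) (x : R),
    (t v * l (-((v⁻¹ : Rˣ) : R)) * t v) * t x =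
      l (-(((v⁻¹ : Rˣ) : R) * ((v⁻¹ : Rˣ) : R) * x)) * (t v * l (-((v⁻¹ : Rˣ) : R)) * t v)
  comm : ∀ e x y : R, e * e = e → t (e * x) * l ((1 - e) * y) = l ((1 - e) * y) * t (e * x)

namespace StData

variable {R : Type} [CommRing R] {G : Type} [Group G] (D : StData R G)

def w (v : Rˣ) : G := D.t v * D.l (-((v⁻¹ : Rˣ) : R)) * D.t v

def h (v : Rˣ) : G := D.w v * D.w (-1)

lemma t_zero : D.t 0 = 1 := by
  have := D.t_add 0 0
  simpa using this

lemma l_zero : D.l 0 = 1 := by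
  have := D.l_add 0 0
  simpa using this

lemma t_neg (x : R) : D.t (-x) = (D.t x)⁻¹ := by
  apply eq_inv_of_mul_eq_one_left
  rw [← D.t_add]; simp [t_zero]

lemma l_neg (x : R) : D.l (-x) = (D.l x)⁻¹ := by
  apply eq_inv_of_mul_eq_one_left
  rw [← D.l_add]; simp [l_zero]

lemma w_neg (v : Rˣ) : D.w (-v) = (D.w v)⁻¹ := by
  simp [w, l_neg, t_neg, mul_assoc]

lemma w_t (v : Rˣ) (x : R) : D.w v * D.t x = D.l (-(((v⁻¹ : Rˣ) : R) * ((v⁻¹ : Rˣ) : R) * x)) * D.w v :=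
  D.wt v x

lemma t_w (v : Rˣ) (x : R) : D.t x * D.w v = D.w v * D.l (-(((v⁻¹ : Rˣ) : R) * ((v⁻¹ : Rˣ) : R) * x)) := by
  have := D.w_t (-v) x
  rw [w_neg, inv_mul_eq_iff_eq_mul, ← mul_assoc, eq_mul_inv_iff_mul_eq] at this
  simpa using this

lemma w_l (v : Rˣ) (x : R) : D.w v * D.l x = D.t (-((v : R) * v * x)) * D.w v := by
  rw [t_w]; congr 2
  have : ((v⁻¹ : Rˣ) : R) * v = 1 := by simp
  linear_combination (-x * ((v⁻¹ : Rˣ) : R) * v - x) * this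

lemma l_w (v : Rˣ) (x : R) : D.l x * D.w v = D.w v * D.t (-((v : R) * v * x)) := by
  rw [w_t]; congr 2
  have : ((v⁻¹ : Rˣ) : R) * v = 1 := by simp
  linear_combination (-x * ((v⁻¹ : Rˣ) : R) * v - x) * this

lemma w_eq' (v : Rˣ) : D.w v = D.l (-((v⁻¹ : Rˣ) : R)) * D.t v * D.l (-((v⁻¹ : Rˣ) : R)) := by
  have h1 := D.w_t v v
  have h2 : (-(((v⁻¹ : Rˣ) : R) * ((v⁻¹ : Rˣ) : R) * v)) = -((v⁻¹ : Rˣ) : R) := by simp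
  rw [h2] at h1
  conv_rhs at h1 => rw [w]
  rw [← mul_assoc, ← mul_assoc] at h1
  exact mul_right_cancel h1

lemma t_eq (v : Rˣ) : D.t v = D.l ((v⁻¹ : Rˣ) : R) * D.w v * D.l ((v⁻¹ : Rˣ) : R) := by
  rw [w_eq', l_neg]; group

lemma l_eq (v : Rˣ) : D.l v = D.t ((v⁻¹ : Rˣ) : R) * D.w (-v⁻¹) * D.t ((v⁻¹ : Rˣ) : R) := by
  have : D.w (-v⁻¹) = D.t (-((v⁻¹ : Rˣ) : R)) * D.l v * D.t (-((v⁻¹ : Rˣ) : R)) := by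
    simp [w]
  rw [this, t_neg]; group

lemma h_t (v : Rˣ) (x : R) : D.h v * D.t x = D.t ((v : R) * v * x) * D.h v := by
  rw [h, mul_assoc, w_t, ← mul_assoc, w_l, mul_assoc]
  simp

lemma h_l (v : Rˣ) (x : R) : D.h v * D.l x = D.l (((v⁻¹ : Rˣ) : R) * ((v⁻¹ : Rˣ) : R) * x) * D.h v := by
  rw [h, mul_assoc, w_l, ← mul_assoc, w_t, mul_assoc]
  simp

lemma h_one : D.h 1 = 1 := by simp [h, w_neg]

lemma h_inv (v : Rˣ) : (D.h v)⁻¹ = D.w 1 * D.w (-v) := by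
  simp [h, w_neg]

lemma w_mul_w (a b : Rˣ) : D.w a * D.w b = D.h a * (D.h (-b))⁻¹ := by
  simp [h, w_neg]

lemma h_conj_w (a b : Rˣ) : D.h a * D.w b * (D.h a)⁻¹ = D.w (a * a * b) := by
  rw [mul_inv_eq_iff_eq_mul, w, w, ← mul_assoc, ← mul_assoc, h_t, mul_assoc (D.t _) (D.h a), h_l, ← mul_assoc,
    mul_assoc _ (D.h a) (D.t _), h_t]
  simp only [mul_assoc, Units.val_mul, mul_inv_rev, mul_neg]
  congr 4
  ring

lemma h_conj_h (a b : Rˣ) : D.h a * D.h b * (D.h a)⁻¹ = D.h (a * a * b) * (D.h (a * a))⁻¹ := by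
  have h1 := D.h_conj_w a b
  have h2 := D.h_conj_w a (-1)
  have : D.h a * D.h b * (D.h a)⁻¹ = (D.h a * D.w b * (D.h a)⁻¹) * (D.h a * D.w (-1) * (D.h a)⁻¹) := by
    have e : D.h b = D.w b * D.w (-1) := rfl
    rw [e]; group
  rw [this, h1, h2, w_mul_w]; simp

/-- the central defect -/
def c (a b : Rˣ) : G := D.h a * D.h b * (D.h (a * b))⁻¹

lemma c_t (a b : Rˣ) (x : R) : D.c a b * D.t x = D.t x * D.c a b := by
  have h1 : (D.h (a * b))⁻¹ * D.t x = D.t (((b⁻¹ : Rˣ) : R) * ((b⁻¹ : Rˣ) : R) * (((a⁻¹ : Rˣ) : R) * ((a⁻¹ : Rˣ) : R) * x)) * (D.h (a * b))⁻¹ := by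
    rw [inv_mul_eq_iff_eq_mul, ← mul_assoc, eq_mul_inv_iff_mul_eq, h_t]
    congr 2
    have ha : (a : R) * ((a⁻¹ : Rˣ) : R) = 1 := by simp
    have hb : (b : R) * ((b⁻¹ : Rˣ) : R) = 1 := by simp
    push_cast
    calc x = ((a : R) * ((a⁻¹ : Rˣ) : R)) ^ 2 * ((b : R) * ((b⁻¹ : Rˣ) : R)) ^ 2 * x := by rw [ha, hb]; ring
      _ = _ := by ring
  rw [c, mul_assoc, h1, ← mul_assoc, mul_assoc (D.h a), h_t, ← mul_assoc, h_t]
  simp [← mul_assoc]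

lemma c_l (a b : Rˣ) (x : R) : D.c a b * D.l x = D.l x * D.c a b := by
  have h1 : (D.h (a * b))⁻¹ * D.l x = D.l (((b : Rˣ) : R) * ((b : Rˣ) : R) * (((a : Rˣ) : R) * ((a : Rˣ) : R) * x)) * (D.h (a * b))⁻¹ := by
    rw [inv_mul_eq_iff_eq_mul, ← mul_assoc, eq_mul_inv_iff_mul_eq, h_l]
    congr 2
    have ha : (a : R) * ((a⁻¹ : Rˣ) : R) = 1 := by simp
    have hb : (b : R) * ((b⁻¹ : Rˣ) : R) = 1 := by simp
    rw [mul_inv_rev]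
    push_cast
    calc x = ((a : R) * ((a⁻¹ : Rˣ) : R)) ^ 2 * ((b : R) * ((b⁻¹ : Rˣ) : R)) ^ 2 * x := by rw [ha, hb]; ring
      _ = _ := by ring
  rw [c, mul_assoc, h1, ← mul_assoc, mul_assoc (D.h a), h_l, ← mul_assoc, h_l]
  simp [← mul_assoc]

lemma central_w (z : G) (ht : ∀ x, z * D.t x = D.t x * z) (hl : ∀ x, z * D.l x = D.l x * z) (v : Rˣ) :
    z * D.w v = D.w v * z := by
  have a : Commute z (D.t v) := ht _
  have b : Commute z (D.l (-((v⁻¹ : Rˣ) : R))) := hl _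
  exact ((a.mul_right b).mul_right a)

lemma central_h (z : G) (ht : ∀ x, z * D.t x = D.t x * z) (hl : ∀ x, z * D.l x = D.l x * z) (v : Rˣ) :
    z * D.h v = D.h v * z :=
  Commute.mul_right (D.central_w z ht hl v) (D.central_w z ht hl _)

lemma c_h (a b v : Rˣ) : D.c a b * D.h v = D.h v * D.c a b :=
  D.central_h _ (D.c_t a b) (D.c_l a b) v

/-- Steinberg relation -/
lemma steinberg (x y : Rˣ) (hxy : (x : R) + y = 1) : D.h x * D.h y = D.h (x * y) := by
  have key : D.l (-((x⁻¹ : Rˣ) : R)) * D.l (-((y⁻¹ : Rˣ) : R)) = D.l (-(((x * y)⁻¹ : Rˣ) : R)) := by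
    rw [← D.l_add]; congr 1
    have hx : (x : R) * ((x⁻¹ : Rˣ) : R) = 1 := by simp
    have hy : (y : R) * ((y⁻¹ : Rˣ) : R) = 1 := by simp
    rw [mul_inv_rev]; push_cast
    linear_combination -(((x⁻¹ : Rˣ) : R) * ((y⁻¹ : Rˣ) : R)) * hxy + ((y⁻¹ : Rˣ) : R) * hx + ((x⁻¹ : Rˣ) : R) * hy
  have e (v : Rˣ) : D.l (-((v⁻¹ : Rˣ) : R)) = D.t (-v) * D.w v * D.t (-v) := by
    rw [w, t_neg]; group
  have e1 : D.t (-1) = D.l (-1) * D.w (-1) * D.l (-1) := by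
    simpa using D.t_eq (-1)
  rw [e, e, e] at key
  have k2 : D.t (-(x : R)) * D.w x * D.t (-x) * (D.t (-y) * D.w y * D.t (-y)) =
      D.t (-((x * y : Rˣ) : R)) * (D.w x * D.w (-1) * D.w y) * D.t (-((x * y : Rˣ) : R)) := by
    have a1 : D.t (-(x : R)) * D.w x * D.t (-x) * (D.t (-y) * D.w y * D.t (-y)) =
        D.t (-(x : R)) * D.w x * (D.t (-x) * D.t (-y)) * D.w y * D.t (-y) := by group
    have a2 : -(x : R) + -y = -1 := by linear_combination -hxy
    rw [a1, ← D.t_add, a2, e1]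
    have a3 : D.t (-(x : R)) * D.w x * (D.l (-1) * D.w (-1) * D.l (-1)) * D.w y * D.t (-y) =
      D.t (-(x : R)) * (D.w x * D.l (-1)) * D.w (-1) * (D.l (-1) * D.w y) * D.t (-y) := by group
    rw [a3, w_l, l_w]
    have a4 : D.t (-(x : R)) * (D.t (-(↑x * ↑x * -1)) * D.w x) * D.w (-1) * (D.w y * D.t (-(↑y * ↑y * -1))) * D.t (-(y : R))
       = (D.t (-(x : R)) * D.t (-(↑x * ↑x * -1))) * (D.w x * D.w (-1) * D.w y) * (D.t (-(↑y * ↑y * -1)) * D.t (-(y : R))) := by group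
    rw [a4, ← D.t_add, ← D.t_add]
    congr 2
    · congr 2; push_cast; linear_combination (x : R) * hxy
    · push_cast; linear_combination (y : R) * hxy
  rw [k2] at key
  have k3 := mul_left_cancel (mul_right_cancel key)
  rw [h, h, h, ← k3]; group

/-- `h (-1/a) = h(-1) h(a)⁻¹` -/
lemma w_one_conj (v : Rˣ) : D.w 1 * D.w v = D.w v⁻¹ * D.w 1 := by
  rw [w_eq' D v⁻¹]
  have : D.w v = D.t v * D.l (-((v⁻¹ : Rˣ) : R)) * D.t v := rfl
  rw [this, ← mul_assoc, ← mul_assoc, w_t, mul_assoc (D.l _) (D.w 1), w_l]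
  rw [← mul_assoc, mul_assoc _ (D.w 1), w_t]
  simp [mul_assoc]

lemma h_neg_inv (a : Rˣ) : D.h (-a⁻¹) = D.h (-1) * (D.h a)⁻¹ := by
  rw [h_inv, h, h, w_neg, w_neg, w_neg]
  have h1 := D.w_one_conj a⁻¹
  rw [← mul_inv_rev, h1, inv_inv]
  group

end StData

namespace StData

variable {R : Type} [CommRing R] {G : Type} [Group G] (D : StData R G)

lemma rel_of_unit_right (hm : ∀ a b, D.h (a * b) = D.h a * D.h b) (y : R) (x W : Rˣ) (hW : (W : R) = 1 + x * y) :
    D.l y * D.t x = D.t (x * ((W⁻¹ : Rˣ) : R)) * D.h W⁻¹ * D.l (y * ((W⁻¹ : Rˣ) : R)) := by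
  have hWi : (W : R) * ((W⁻¹ : Rˣ) : R) = 1 := by simp
  have hxi : (x : R) * ((x⁻¹ : Rˣ) : R) = 1 := by simp
  have e1 : D.l y * D.t x = D.l ((W * x⁻¹ : Rˣ) : R) * D.w x * D.l ((x⁻¹ : Rˣ) : R) := by
    rw [D.t_eq, ← mul_assoc, ← mul_assoc, ← D.l_add]
    congr 3
    push_cast
    linear_combination -((x⁻¹ : Rˣ) : R) * hW - y * hxi
  rw [e1, D.l_eq, mul_assoc (_ * _) (D.t _) (D.w x), D.t_w x]
  have e2 : D.w (-(W * x⁻¹)⁻¹) * D.w x = D.h W⁻¹ := by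
    rw [w_mul_w, mul_inv_eq_iff_eq_mul, ← hm]
    congr 1
    simp [mul_comm]
  rw [← e2]
  simp only [mul_assoc]
  rw [← D.l_add]
  congr 1
  · simp
    congr 1
    linear_combination (((x⁻¹ : Rˣ) : R)) * hWi * (-1) + ((x⁻¹ : Rˣ) : R) * ((W⁻¹ : Rˣ) : R) * hW + (((W⁻¹ : Rˣ) : R) * y) * hxi

lemma rel_of_unit_left (hm : ∀ a b, D.h (a * b) = D.h a * D.h b) (x : R) (y W : Rˣ) (hW : (W : R) = 1 + x * y) :
    D.l y * D.t x = D.t (x * ((W⁻¹ : Rˣ) : R)) * D.h W⁻¹ * D.l (y * ((W⁻¹ : Rˣ) : R)) := by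
  have hWi : (W : R) * ((W⁻¹ : Rˣ) : R) = 1 := by simp
  have hyi : (y : R) * ((y⁻¹ : Rˣ) : R) = 1 := by simp
  have e1 : D.l y * D.t x = D.t ((y⁻¹ : Rˣ) : R) * D.w (-y⁻¹) * D.t ((W * y⁻¹ : Rˣ) : R) := by
    rw [D.l_eq, mul_assoc, mul_assoc, mul_assoc, ← D.t_add]
    congr 3
    push_cast
    linear_combination -((y⁻¹ : Rˣ) : R) * hW - x * hyi
  rw [e1, D.t_eq (W * y⁻¹), mul_assoc, ← mul_assoc (D.w _), ← mul_assoc (D.w _), w_l]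
  have e2 : D.w (-y⁻¹) * D.w (W * y⁻¹) = D.h W⁻¹ := by
    rw [w_mul_w, mul_inv_eq_iff_eq_mul, ← hm]
    congr 1
    simp
  rw [← e2]
  simp only [← mul_assoc]
  rw [← D.t_add]
  congr 1
  · congr 3
    simp only [mul_inv_rev, inv_inv]; push_cast
    linear_combination (((y⁻¹ : Rˣ) : R)) * hWi * (-1) + ((y⁻¹ : Rˣ) : R) * ((W⁻¹ : Rˣ) : R) * hW + (((W⁻¹ : Rˣ) : R) * x  - (((y⁻¹ : Rˣ) : R)) * ((W⁻¹ : Rˣ) : R) ) * hyi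

lemma rel [IsLocalRing R] (hm : ∀ a b, D.h (a * b) = D.h a * D.h b) (x y : R) (W : Rˣ) (hW : (W : R) = 1 + x * y) :
    D.l y * D.t x = D.t (x * ((W⁻¹ : Rˣ) : R)) * D.h W⁻¹ * D.l (y * ((W⁻¹ : Rˣ) : R)) := by
  by_cases hx : IsUnit x
  · obtain ⟨x, rfl⟩ := hx
    exact D.rel_of_unit_right hm y x W hW
  by_cases hy : IsUnit y
  · obtain ⟨y, rfl⟩ := hy
    exact D.rel_of_unit_left hm x y W hW
  -- both nonunits
  have h1 : IsUnit (1 + y) := by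
    rcases IsLocalRing.isUnit_or_isUnit_of_add_one (a := -y) (b := 1 + y) (by ring) with h | h
    · exact absurd (by simpa using h) hy
    · exact h
  have h2 : IsUnit (x - 1) := by
    rcases IsLocalRing.isUnit_or_isUnit_of_add_one (a := x) (b := 1 - x) (by ring) with h | h
    · exact absurd h hx
    · simpa using h.neg
  obtain ⟨V, hV⟩ := h1
  obtain ⟨X, hX⟩ := h2
  have r1 := D.rel_of_unit_right hm y 1 V (by rw [hV]; simp)
  have r2 := D.rel_of_unit_right hm (y * ((V⁻¹ : Rˣ) : R)) X (W * V⁻¹) (by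
    have hVi : (V : R) * ((V⁻¹ : Rˣ) : R) = 1 := by simp
    push_cast
    rw [hX, hW]
    linear_combination hVi - ((V⁻¹ : Rˣ) : R) * hV)
  have e : D.l y * D.t x = D.l y * D.t (1 : Rˣ) * D.t X := by
    rw [mul_assoc, ← D.t_add]; congr 2; rw [hX]; simp
  rw [e, r1, mul_assoc _ _ (D.t X), r2]
  have e3 : D.h W⁻¹ = D.h V⁻¹ * D.h (W * V⁻¹)⁻¹ := by
    rw [← hm]; congr 1; simp
  have e4 : D.t (((1 : Rˣ) : R) * ((V⁻¹ : Rˣ) : R)) * D.h V⁻¹ * (D.t (X * (((W * V⁻¹)⁻¹ : Rˣ) : R)) * D.h (W * V⁻¹)⁻¹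
      * D.l (y * ((V⁻¹ : Rˣ) : R) * (((W * V⁻¹)⁻¹ : Rˣ) : R))) =
      D.t (((1 : Rˣ) : R) * ((V⁻¹ : Rˣ) : R)) * (D.h V⁻¹ * D.t (X * (((W * V⁻¹)⁻¹ : Rˣ) : R))) * D.h (W * V⁻¹)⁻¹
      * D.l (y * ((V⁻¹ : Rˣ) : R) * (((W * V⁻¹)⁻¹ : Rˣ) : R)) := by group
  rw [e4, h_t, e3, ← mul_assoc, ← D.t_add, ← mul_assoc, ← mul_assoc]
  have hVi : (V : R) * ((V⁻¹ : Rˣ) : R) = 1 := by simp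
  have hWi : (W : R) * ((W⁻¹ : Rˣ) : R) = 1 := by simp
  congr 1
  · congr 3
    simp only [mul_inv_rev, inv_inv]; push_cast
    rw [hX]
    rw [hV] at hVi ⊢
    generalize ((V⁻¹ : Rˣ) : R) = v at *
    generalize ((W⁻¹ : Rˣ) : R) = u at *
    rw [hW] at hWi
    linear_combination ( (x - 1) * u * v + x * u) * hVi - v * hWi
  · congr 1
    simp only [mul_inv_rev, inv_inv]; push_cast
    linear_combination y * ((W⁻¹ : Rˣ) : R) * hVi

def F0 (b c : R) (d : Rˣ) : G := D.t (b * ((d⁻¹ : Rˣ) : R)) * D.h d⁻¹ * D.l (c * ((d⁻¹ : Rˣ) : R))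

def F1 (a d : R) (c : Rˣ) : G := D.F0 (-a) d (-c) * D.w 1

lemma F0_L (b c y : R) (d : Rˣ) : D.F0 b (c + d * y) d = D.F0 b c d * D.l y := by
  rw [F0, F0, mul_assoc _ _ (D.l y), ← D.l_add]
  congr 2
  have : (d : R) * ((d⁻¹ : Rˣ) : R) = 1 := by simp
  linear_combination y * this

lemma F0_T [IsLocalRing R] (hm : ∀ a b, D.h (a * b) = D.h a * D.h b) (a b c x : R) (d d' : Rˣ)
    (hdet : a * d - b * c = 1) (hd' : (d' : R) = d + c * x) :
    D.F0 (b + a * x) c d' = D.F0 b c d * D.t x := by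
  have hdi : (d : R) * ((d⁻¹ : Rˣ) : R) = 1 := by simp
  have hdi' : (d' : R) * ((d'⁻¹ : Rˣ) : R) = 1 := by simp
  rw [F0, F0, mul_assoc _ _ (D.t x), D.rel hm x (c * ((d⁻¹ : Rˣ) : R)) (d' * d⁻¹)
    (by push_cast; rw [hd']; linear_combination hdi)]
  have e : D.h d'⁻¹ = D.h d⁻¹ * D.h (d' * d⁻¹)⁻¹ := by rw [← hm]; simp
  rw [e]
  simp only [← mul_assoc]
  rw [mul_assoc (D.t (b * _)), h_t, ← mul_assoc, ← D.t_add]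
  congr 1
  · congr 3
    simp only [mul_inv_rev, inv_inv]; push_cast
    generalize ((d⁻¹ : Rˣ) : R) = u at *
    generalize ((d'⁻¹ : Rˣ) : R) = v at *
    rw [hd'] at *
    linear_combination u*x*v*hdet - a*x*v*hdi - b*v*hdi + b*u*hdi' - u*x*v*hdi
  · congr 1
    simp only [mul_inv_rev, inv_inv]; push_cast
    linear_combination -c * ((d'⁻¹ : Rˣ) : R) * hdi

lemma F1_T (a d x : R) (c : Rˣ) : D.F1 a (d + c * x) c = D.F1 a d c * D.t x := by
  rw [F1, F1, mul_assoc, w_t, ← mul_assoc, ← D.F0_L]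
  congr 2; simp

lemma F1_L [IsLocalRing R] (hm : ∀ a b, D.h (a * b) = D.h a * D.h b) (a b d y : R) (c c' : Rˣ)
    (hdet : a * d - b * c = 1) (hc' : (c' : R) = c + d * y) :
    D.F1 (a + b * y) d c' = D.F1 a d c * D.l y := by
  rw [F1, F1, mul_assoc, w_l, ← mul_assoc, ← D.F0_T hm b (-a) d _ (-c) (-c')]
  · congr 2; simp; ring
  · push_cast; linear_combination hdet
  · push_cast; rw [hc']; ring

lemma F0_eq_F1 (hm : ∀ a b, D.h (a * b) = D.h a * D.h b) (a b : R) (c d : Rˣ)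
    (hdet : a * d - b * c = 1) : D.F0 b c d = D.F1 a d c := by
  have hdi : (d : R) * ((d⁻¹ : Rˣ) : R) = 1 := by simp
  have hci : (c : R) * ((c⁻¹ : Rˣ) : R) = 1 := by simp
  rw [F1, F0, F0]
  have e0 : (d : R) * (((-c)⁻¹ : Rˣ) : R) = ((-(d * c⁻¹) : Rˣ) : R) := by
    rw [inv_neg]; push_cast; ring
  rw [e0, D.l_eq]
  have e1 : ∀ p q r s u : G, p * q * (r * s * r) * u = p * (q * r) * s * (r * u) := by intros; group
  rw [e1, t_w, h_t, ← mul_assoc (D.t _) (D.t _) (D.h _), ← D.t_add, ← mul_assoc]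
  have e2 : D.h (-c)⁻¹ * D.w (-(-(d * c⁻¹))⁻¹) * D.w 1 = D.h d⁻¹ := by
    rw [mul_assoc, w_mul_w, ← mul_assoc, mul_inv_eq_iff_eq_mul, ← hm, ← hm]
    congr 1
    simp [inv_neg]
  have e3 : ∀ p q s u v: G, p * q * s * u * v = p * (q * s * u) * v := by intros; group
  rw [e3, e2]
  congr 1
  · congr 2
    simp only [inv_neg, mul_inv_rev, inv_inv]; push_cast
    generalize ((d⁻¹ : Rˣ) : R) = u at *
    generalize ((c⁻¹ : Rˣ) : R) = v at *
    linear_combination (-v*u) * hdet + a * v * hdi - b * u * hci + (v * u)*hci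
  · congr 1
    simp [inv_neg]

end StData

namespace StData

variable {R : Type} [CommRing R] {G : Type} [Group G] (D : StData R G)

def Tm (x : R) : Matrix.SpecialLinearGroup (Fin 2) R := ⟨!![1, x; 0, 1], by simp [Matrix.det_fin_two_of]⟩

def Lm (x : R) : Matrix.SpecialLinearGroup (Fin 2) R := ⟨!![1, 0; x, 1], by simp [Matrix.det_fin_two_of]⟩

def Gam : Subgroup (Matrix.SpecialLinearGroup (Fin 2) R × G) :=
  Subgroup.closure (Set.range (fun x => (Tm x, D.t x)) ∪ Set.range (fun x => (Lm x, D.l x)))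

def Inj : Prop := ∀ x, ((1 : Matrix.SpecialLinearGroup (Fin 2) R), x) ∈ D.Gam → x = 1

lemma Tm_mem (x : R) : (Tm x, D.t x) ∈ D.Gam := Subgroup.subset_closure (Or.inl ⟨x, rfl⟩)
lemma Lm_mem (x : R) : (Lm x, D.l x) ∈ D.Gam := Subgroup.subset_closure (Or.inr ⟨x, rfl⟩)

lemma Inj.eq {D : StData R G} (hD : D.Inj) {A : Matrix.SpecialLinearGroup (Fin 2) R} {x y : G}
    (hx : (A, x) ∈ D.Gam) (hy : (A, y) ∈ D.Gam) : x = y := by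
  have := hD (x * y⁻¹) (by simpa using D.Gam.mul_mem hx (D.Gam.inv_mem hy))
  exact mul_inv_eq_one.mp this

lemma det_eq (A : Matrix.SpecialLinearGroup (Fin 2) R) : A 0 0 * A 1 1 - A 0 1 * A 1 0 = 1 := by
  rw [← Matrix.det_fin_two]; exact A.2

open Classical in
noncomputable def F (A : Matrix.SpecialLinearGroup (Fin 2) R) : G :=
  if hd : IsUnit (A 1 1) then D.F0 (A 0 1) (A 1 0) hd.unit else
    if hc : IsUnit (A 1 0) then D.F1 (A 0 0) (A 1 1) hc.unit else 1

lemma F_eq0 (A : Matrix.SpecialLinearGroup (Fin 2) R) (d : Rˣ) (hd : A 1 1 = d) :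
    D.F A = D.F0 (A 0 1) (A 1 0) d := by
  have h : IsUnit (A 1 1) := hd ▸ d.isUnit
  rw [F, dif_pos h]
  congr 1
  ext; simp [hd]

lemma F_eq1 (hm : ∀ a b, D.h (a * b) = D.h a * D.h b) (A : Matrix.SpecialLinearGroup (Fin 2) R) (c : Rˣ)
    (hc : A 1 0 = c) :
    D.F A = D.F1 (A 0 0) (A 1 1) c := by
  have h : IsUnit (A 1 0) := hc ▸ c.isUnit
  by_cases h' : IsUnit (A 1 1)
  · obtain ⟨d, hd⟩ := h'
    rw [D.F_eq0 A d hd.symm, hc, ← hd]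
    apply D.F0_eq_F1 hm
    rw [hd, ← hc]; exact det_eq A
  · rw [F, dif_neg h', dif_pos h]
    congr 1
    ext; simp [hc]

lemma isUnit_of_not [IsLocalRing R] (A : Matrix.SpecialLinearGroup (Fin 2) R) (h : ¬ IsUnit (A 1 1)) :
    IsUnit (A 1 0) := by
  rcases IsLocalRing.isUnit_or_isUnit_of_add_one (a := A 0 0 * A 1 1) (b := - (A 0 1 * A 1 0))
    (by linear_combination det_eq A) with h1 | h1
  · exact absurd (isUnit_of_mul_isUnit_right h1) h
  · rw [IsUnit.neg_iff] at h1
    exact isUnit_of_mul_isUnit_right h1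

lemma mulT (A : Matrix.SpecialLinearGroup (Fin 2) R) (x : R) :
    (A * Tm x) 0 0 = A 0 0 ∧ (A * Tm x) 0 1 = A 0 1 + A 0 0 * x ∧ (A * Tm x) 1 0 = A 1 0 ∧
    (A * Tm x) 1 1 = A 1 1 + A 1 0 * x := by
  refine ⟨?_, ?_, ?_, ?_⟩ <;> rw [Matrix.SpecialLinearGroup.coe_mul] <;>
    simp [Tm, Matrix.mul_apply, Fin.sum_univ_two, add_comm]

lemma mulL (A : Matrix.SpecialLinearGroup (Fin 2) R) (x : R) :
    (A * Lm x) 0 0 = A 0 0 + A 0 1 * x ∧ (A * Lm x) 0 1 = A 0 1 ∧ (A * Lm x) 1 0 = A 1 0 + A 1 1 * x ∧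
    (A * Lm x) 1 1 = A 1 1 := by
  refine ⟨?_, ?_, ?_, ?_⟩ <;> rw [Matrix.SpecialLinearGroup.coe_mul] <;>
    simp [Lm, Matrix.mul_apply, Fin.sum_univ_two]

lemma F_T [IsLocalRing R] (hm : ∀ a b, D.h (a * b) = D.h a * D.h b)
    (A : Matrix.SpecialLinearGroup (Fin 2) R) (x : R) : D.F (A * Tm x) = D.F A * D.t x := by
  obtain ⟨h1, h2, h3, h4⟩ := mulT A x
  by_cases hc : IsUnit (A 1 0)
  · obtain ⟨c, hc⟩ := hc
    rw [D.F_eq1 hm A c hc.symm, D.F_eq1 hm _ c (h3.trans hc.symm), h1, h4, ← hc, F1_T]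
  · have hd : IsUnit (A 1 1) := by
      by_contra h; exact hc (isUnit_of_not A h)
    have hd' : IsUnit ((A * Tm x) 1 1) := by
      by_contra h; have := (isUnit_of_not _ h); rw [h3] at this; exact hc this
    obtain ⟨d, hd⟩ := hd
    obtain ⟨d', hd'⟩ := hd'
    rw [D.F_eq0 _ d hd.symm, D.F_eq0 _ d' hd'.symm, h2, h3]
    apply D.F0_T hm
    · rw [hd]; exact det_eq A
    · rw [hd, hd', h4]

lemma F_L [IsLocalRing R] (hm : ∀ a b, D.h (a * b) = D.h a * D.h b)
    (A : Matrix.SpecialLinearGroup (Fin 2) R) (x : R) : D.F (A * Lm x) = D.F A * D.l x := by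
  obtain ⟨h1, h2, h3, h4⟩ := mulL A x
  by_cases hc : IsUnit (A 1 1)
  · obtain ⟨c, hc⟩ := hc
    rw [D.F_eq0 A c hc.symm, D.F_eq0 _ c (h4.trans hc.symm), h2, h3, ← hc, F0_L]
  · have hd := isUnit_of_not A hc
    have hd' : IsUnit ((A * Lm x) 1 0) := isUnit_of_not _ (by rwa [h4])
    obtain ⟨d, hd⟩ := hd
    obtain ⟨d', hd'⟩ := hd'
    rw [D.F_eq1 hm _ d hd.symm, D.F_eq1 hm _ d' hd'.symm, h1, h4]
    apply D.F1_L hm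
    · rw [hd]; exact det_eq A
    · rw [hd, hd', h3]

lemma inj_of_local [IsLocalRing R] (hm : ∀ a b, D.h (a * b) = D.h a * D.h b) : D.Inj := by
  have key : ∀ z ∈ D.Gam, ∀ A, D.F (A * z.1) = D.F A * z.2 := by
    intro z hz
    induction hz using Subgroup.closure_induction with
    | mem z hz =>
      rcases hz with ⟨x, rfl⟩ | ⟨x, rfl⟩
      · intro A; exact D.F_T hm A x
      · intro A; exact D.F_L hm A x
    | one => intro A; simp
    | mul x y _ _ hx hy =>
      intro A
      rw [Prod.fst_mul, Prod.snd_mul, ← mul_assoc, hy, hx, mul_assoc]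
    | inv x _ hx =>
      intro A
      have := hx (A * x.1⁻¹)
      rw [inv_mul_cancel_right] at this
      rw [Prod.fst_inv, Prod.snd_inv, this, mul_inv_cancel_right]
  intro x hx
  have := key _ hx 1
  simpa using this

lemma inj_of_subsingleton [Subsingleton R] : D.Inj := by
  have key : ∀ z ∈ D.Gam, z.2 = 1 := by
    intro z hz
    induction hz using Subgroup.closure_induction with
    | mem z hz =>
      rcases hz with ⟨x, rfl⟩ | ⟨x, rfl⟩
      · simp [Subsingleton.elim x 0, D.t_zero]
      · simp [Subsingleton.elim x 0, D.l_zero]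
    | one => simp
    | mul x y _ _ hx hy => simp [hx, hy]
    | inv x _ hx => simp [hx]
  intro x hx
  exact key _ hx

/-- the matrix of `w v` -/
lemma w_mem (v : Rˣ) : ((Tm (v : R) * Lm (-((v⁻¹ : Rˣ) : R)) * Tm (v : R) : Matrix.SpecialLinearGroup (Fin 2) R), D.w v) ∈ D.Gam :=
  D.Gam.mul_mem (D.Gam.mul_mem (D.Tm_mem _) (D.Lm_mem _)) (D.Tm_mem _)

lemma Wm_eq (v : Rˣ) : ((Tm (v : R) * Lm (-((v⁻¹ : Rˣ) : R)) * Tm (v : R) : Matrix.SpecialLinearGroup (Fin 2) R) : Matrix (Fin 2) (Fin 2) R) =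
    !![0, (v : R); -((v⁻¹ : Rˣ) : R), 0] := by
  rw [Matrix.SpecialLinearGroup.coe_mul, Matrix.SpecialLinearGroup.coe_mul]
  simp [Tm, Lm]

def Hm (v : Rˣ) : Matrix.SpecialLinearGroup (Fin 2) R :=
  ⟨!![(v : R), 0; 0, ((v⁻¹ : Rˣ) : R)], by simp [Matrix.det_fin_two_of]⟩

lemma h_mem (v : Rˣ) : (Hm v, D.h v) ∈ D.Gam := by
  have := D.Gam.mul_mem (D.w_mem v) (D.w_mem (-1))
  rw [Prod.mk_mul_mk] at this
  convert this using 1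
  refine Prod.ext (Subtype.ext ?_) rfl
  dsimp only
  rw [Matrix.SpecialLinearGroup.coe_mul, Wm_eq, Wm_eq]
  simp [Hm]

lemma Inj.hm {D : StData R G} (hD : D.Inj) (a b : Rˣ) : D.h (a * b) = D.h a * D.h b := by
  apply hD.eq (D.h_mem _)
  have := D.Gam.mul_mem (D.h_mem a) (D.h_mem b)
  rw [Prod.mk_mul_mk] at this
  convert this using 1
  refine Prod.ext (Subtype.ext ?_) rfl
  dsimp only
  rw [Matrix.SpecialLinearGroup.coe_mul]
  simp [Hm, mul_comm]

end StData

namespace StData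

variable {R : Type} [CommRing R] {R₁ : Type} [CommRing R₁] {R₂ : Type} [CommRing R₂] {G : Type} [Group G]

/-- transport along a ring isomorphism -/
def comap (D : StData R G) (f : R₁ ≃+* R) : StData R₁ G where
  t x := D.t (f x)
  l x := D.l (f x)
  t_add x y := by rw [map_add, D.t_add]
  l_add x y := by rw [map_add, D.l_add]
  wt v x := by
    have := D.wt (Units.map f.toMonoidHom v) (f x)
    simpa using this
  comm e x y he := by
    have := D.comm (f e) (f x) (f y) (by rw [← map_mul, he])
    simpa using this

lemma map_Tm (φ : R →+* R₁) (x : R) : Matrix.SpecialLinearGroup.map φ (Tm x) = Tm (φ x) := by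
  apply Subtype.ext
  change φ.mapMatrix !![1, x; 0, 1] = !![1, φ x; 0, 1]
  ext i j; fin_cases i <;> fin_cases j <;> simp

lemma map_Lm (φ : R →+* R₁) (x : R) : Matrix.SpecialLinearGroup.map φ (Lm x) = Lm (φ x) := by
  apply Subtype.ext
  change φ.mapMatrix !![1, 0; x, 1] = !![1, 0; φ x, 1]
  ext i j; fin_cases i <;> fin_cases j <;> simp

lemma Gam_map (D : StData R G) (D' : StData R₁ G) (φ : R →+* R₁) (ht : ∀ x, D.t x = D'.t (φ x))
    (hl : ∀ x, D.l x = D'.l (φ x)) (z) (hz : z ∈ D.Gam) :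
    (Matrix.SpecialLinearGroup.map φ z.1, z.2) ∈ D'.Gam := by
  induction hz using Subgroup.closure_induction with
  | mem z hz =>
    rcases hz with ⟨x, rfl⟩ | ⟨x, rfl⟩
    · have := D'.Tm_mem (φ x)
      rwa [← map_Tm, ← ht] at this
    · have := D'.Lm_mem (φ x)
      rwa [← map_Lm, ← hl] at this
  | one => dsimp only [Prod.fst_one]; rw [map_one]; exact D'.Gam.one_mem
  | mul x y _ _ hx hy => simpa using D'.Gam.mul_mem hx hy
  | inv x _ hx => simpa using D'.Gam.inv_mem hx

lemma inj_of_comap (D : StData R G) (f : R₁ ≃+* R) (h : (D.comap f).Inj) : D.Inj := by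
  intro x hx
  have := Gam_map D (D.comap f) f.symm.toRingHom (by simp [comap]) (by simp [comap]) _ hx
  apply h
  simpa using this

lemma commute_of_mem (D : StData R G) (g : G) (ht : ∀ x, Commute g (D.t x)) (hl : ∀ x, Commute g (D.l x))
    (z) (hz : z ∈ D.Gam) : Commute g z.2 := by
  induction hz using Subgroup.closure_induction with
  | mem z hz =>
    rcases hz with ⟨x, rfl⟩ | ⟨x, rfl⟩
    · exact ht x
    · exact hl x
  | one => exact Commute.one_right g
  | mul x y _ _ hx hy => exact hx.mul_right hy
  | inv x _ hx => exact hx.inv_right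

variable (D : StData (R₁ × R₂) G)

lemma t_comm_t (D : StData R G) (x y : R) : Commute (D.t x) (D.t y) := by
  rw [Commute, SemiconjBy, ← D.t_add, ← D.t_add, add_comm]

lemma l_comm_l (D : StData R G) (x y : R) : Commute (D.l x) (D.l y) := by
  rw [Commute, SemiconjBy, ← D.l_add, ← D.l_add, add_comm]

lemma t1_comm_l2 (x : R₁) (y : R₂) : Commute (D.t (x, 0)) (D.l (0, y)) := by
  have := D.comm (1, 0) (x, 0) (0, y) (by simp)
  have e : (1 - ((1 : R₁), (0 : R₂))) * (0, y) = (0, y) := by ext <;> simp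
  rw [e] at this
  rw [Commute, SemiconjBy]
  simpa using this

lemma t2_comm_l1 (x : R₁) (y : R₂) : Commute (D.t (0, y)) (D.l (x, 0)) := by
  have := D.comm (0, 1) (0, y) (x, 0) (by simp)
  have e : (1 - ((0 : R₁), (1 : R₂))) * (x, 0) = (x, 0) := by ext <;> simp
  rw [e] at this
  rw [Commute, SemiconjBy]
  simpa using this

lemma w_prod_aux (a : R₁) (b : R₂) (a' : R₁) (b' : R₂) :
    D.t (a, b) * D.l (a', b') * D.t (a, b) =
     (D.t (a, 0) * D.l (a', 0) * D.t (a, 0)) * (D.t (0, b) * D.l (0, b') * D.t (0, b)) := by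
  have e1 : D.t (a, b) = D.t (a, 0) * D.t (0, b) := by rw [← D.t_add]; simp
  have e2 : D.l (a', b') = D.l (a', 0) * D.l (0, b') := by rw [← D.l_add]; simp
  have c1 := (D.t1_comm_l2 a b').eq
  have c2 := (D.t2_comm_l1 a' b).eq
  have c3 := (D.t_comm_t (a, 0) (0, b)).eq
  rw [e1, e2]
  simp only [mul_assoc]
  rw [← mul_assoc (D.t (0, b)) (D.l (a', 0)), c2, mul_assoc, ← mul_assoc (D.l (0, b')) (D.t (a, 0)), ← c1, mul_assoc,
    ← mul_assoc (D.t (0, b)) (D.t (a, 0)), ← c3, mul_assoc]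

def fst : StData R₁ G where
  t x := D.t (x, 0)
  l x := D.l (x, 0)
  t_add x y := by rw [← D.t_add]; simp
  l_add x y := by rw [← D.l_add]; simp
  wt v x := by
    have := D.wt (MulEquiv.prodUnits.symm (v, 1)) (x, 0)
    have e1 : ((MulEquiv.prodUnits.symm (v, (1 : R₂ˣ)) : (R₁ × R₂)ˣ) : R₁ × R₂) = ((v : R₁), 1) := rfl
    have e2 : (((MulEquiv.prodUnits.symm (v, (1 : R₂ˣ)))⁻¹ : (R₁ × R₂)ˣ) : R₁ × R₂) = (((v⁻¹ : R₁ˣ) : R₁), 1) := by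
      rw [← map_inv]; rfl
    rw [e1, e2, Prod.neg_mk, w_prod_aux] at this
    have c : Commute (D.t (0, 1) * D.l (0, -1) * D.t (0, 1)) (D.t (x, 0)) := by
      refine Commute.mul_left (Commute.mul_left ?_ ?_) ?_
      · exact D.t_comm_t _ _
      · exact (D.t1_comm_l2 _ _).symm
      · exact D.t_comm_t _ _
    rw [mul_assoc, c.eq, ← mul_assoc (_ * _ * _) (D.t (x, 0)), ← mul_assoc (D.l (-_))] at this
    have := mul_right_cancel this
    simpa using this
  comm e x y he := by
    have := D.comm (e, 0) (x, 0) (y, 0) (by simp [he])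
    have e : (1 - ((e : R₁), (0 : R₂))) * (y, 0) = ((1 - e) * y, 0) := by ext <;> simp
    rw [e] at this
    simpa using this

def snd : StData R₂ G := (D.comap (RingEquiv.prodComm (R := R₂) (S := R₁))).fst

lemma snd_t (x : R₂) : D.snd.t x = D.t (0, x) := rfl
lemma snd_l (x : R₂) : D.snd.l x = D.l (0, x) := rfl
lemma fst_t (x : R₁) : D.fst.t x = D.t (x, 0) := rfl
lemma fst_l (x : R₁) : D.fst.l x = D.l (x, 0) := rfl

lemma comm_fst_snd (z) (hz : z ∈ D.fst.Gam) (z') (hz' : z' ∈ D.snd.Gam) : Commute z.2 z'.2 := by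
  apply commute_of_mem _ _ _ _ _ hz'
  · intro x
    refine (commute_of_mem D.fst _ ?_ ?_ z hz).symm
    · intro y; exact D.t_comm_t _ _
    · intro y; exact D.t2_comm_l1 _ _
  · intro x
    refine (commute_of_mem D.fst _ ?_ ?_ z hz).symm
    · intro y; exact (D.t1_comm_l2 _ _).symm
    · intro y; exact D.l_comm_l _ _

lemma Gam_decomp (z) (hz : z ∈ D.Gam) : ∃ x₁ x₂, z.2 = x₁ * x₂ ∧
    (Matrix.SpecialLinearGroup.map (RingHom.fst R₁ R₂) z.1, x₁) ∈ D.fst.Gam ∧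
    (Matrix.SpecialLinearGroup.map (RingHom.snd R₁ R₂) z.1, x₂) ∈ D.snd.Gam := by
  induction hz using Subgroup.closure_induction with
  | mem z hz =>
    rcases hz with ⟨x, rfl⟩ | ⟨x, rfl⟩
    · refine ⟨D.fst.t x.1, D.snd.t x.2, ?_, ?_, ?_⟩
      · rw [fst_t, snd_t, ← D.t_add]; simp
      · dsimp only; rw [map_Tm]; exact D.fst.Tm_mem x.1
      · dsimp only; rw [map_Tm]; exact D.snd.Tm_mem x.2
    · refine ⟨D.fst.l x.1, D.snd.l x.2, ?_, ?_, ?_⟩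
      · rw [fst_l, snd_l, ← D.l_add]; simp
      · dsimp only; rw [map_Lm]; exact D.fst.Lm_mem x.1
      · dsimp only; rw [map_Lm]; exact D.snd.Lm_mem x.2
  | one => exact ⟨1, 1, by simp, by dsimp only [Prod.fst_one]; rw [map_one]; exact D.fst.Gam.one_mem, by dsimp only [Prod.fst_one]; rw [map_one]; exact D.snd.Gam.one_mem⟩
  | mul x y _ _ hx hy =>
    obtain ⟨x₁, x₂, h1, h2, h3⟩ := hx
    obtain ⟨y₁, y₂, h1', h2', h3'⟩ := hy
    refine ⟨x₁ * y₁, x₂ * y₂, ?_, ?_, ?_⟩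
    · have c := (D.comm_fst_snd _ h2' _ h3).eq
      dsimp only at c
      rw [Prod.snd_mul, h1, h1', mul_assoc, mul_assoc, ← mul_assoc x₂, ← c, mul_assoc]
    · simpa using D.fst.Gam.mul_mem h2 h2'
    · simpa using D.snd.Gam.mul_mem h3 h3'
  | inv x _ hx =>
    obtain ⟨x₁, x₂, h1, h2, h3⟩ := hx
    refine ⟨x₁⁻¹, x₂⁻¹, ?_, ?_, ?_⟩
    · have c := (D.comm_fst_snd _ h2 _ h3).eq
      dsimp only at c
      rw [Prod.snd_inv, h1, c, mul_inv_rev]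
    · simpa using D.fst.Gam.inv_mem h2
    · simpa using D.snd.Gam.inv_mem h3

lemma inj_prod (h1 : D.fst.Inj) (h2 : D.snd.Inj) : D.Inj := by
  intro x hx
  obtain ⟨x₁, x₂, h, h3, h4⟩ := D.Gam_decomp _ hx
  have e1 := h1 x₁ (by simpa using h3)
  have e2 := h2 x₂ (by simpa using h4)
  simpa [e1, e2] using h

lemma w_prod (a : R₁ˣ) (b : R₂ˣ) : D.w (MulEquiv.prodUnits.symm (a, b)) = D.fst.w a * D.snd.w b := by
  have e1 : ((MulEquiv.prodUnits.symm (a, b) : (R₁ × R₂)ˣ) : R₁ × R₂) = ((a : R₁), (b : R₂)) := rfl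
  have e2 : (((MulEquiv.prodUnits.symm (a, b))⁻¹ : (R₁ × R₂)ˣ) : R₁ × R₂) = (((a⁻¹ : R₁ˣ) : R₁), ((b⁻¹ : R₂ˣ) : R₂)) := by
    rw [← map_inv]; rfl
  rw [w, w, w, e1, e2, Prod.neg_mk, w_prod_aux]
  rfl

lemma h_prod (a : R₁ˣ) (b : R₂ˣ) : D.h (MulEquiv.prodUnits.symm (a, b)) = D.fst.h a * D.snd.h b := by
  have e : (-1 : (R₁ × R₂)ˣ) = MulEquiv.prodUnits.symm (-1, -1) := by
    ext <;> rfl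
  rw [h, h, h, e, w_prod, w_prod]
  have c := (D.comm_fst_snd _ (D.fst.w_mem (-1)) _ (D.snd.w_mem b)).eq
  dsimp only at c
  rw [mul_assoc, mul_assoc, ← mul_assoc (D.snd.w b), ← c, mul_assoc]

end StData

namespace StData

variable {R : Type} [CommRing R] {G : Type} [Group G]

lemma zmod_local (p : ℕ) [Fact p.Prime] (n : ℕ) (hn : n ≠ 0) : IsLocalRing (ZMod (p ^ n)) := by
  have : Fact (1 < p ^ n) := ⟨Nat.one_lt_pow hn (Fact.out : p.Prime).one_lt⟩
  exact IsLocalRing.of_surjective' (PadicInt.toZModPow (p := p) n) (ZMod.ringHom_surjective _)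

lemma comm_mul (D : StData R G) (v a b : Rˣ) (ha : Commute (D.h v) (D.h a)) (hb : Commute (D.h v) (D.h b)) :
    Commute (D.h v) (D.h (a * b)) := by
  have e : D.h (a * b) = (D.c a b)⁻¹ * (D.h a * D.h b) := by rw [c]; group
  have hc : Commute (D.h v) (D.c a b) := (D.c_h a b v).symm
  rw [e]
  exact hc.inv_right.mul_right (ha.mul_right hb)

lemma comm_pow (D : StData R G) (v a : Rˣ) (ha : Commute (D.h v) (D.h a)) (i : ℕ) :
    Commute (D.h v) (D.h (a ^ i)) := by
  induction i with
  | zero => simp [h_one]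
  | succ i ih => rw [pow_succ]; exact D.comm_mul _ _ _ ih ha

lemma comm_all (D : StData R G) (g : Rˣ) (hg : ∀ x, ∃ i : ℕ, g ^ i = x) (a b : Rˣ) : Commute (D.h a) (D.h b) := by
  obtain ⟨i, rfl⟩ := hg a
  obtain ⟨j, rfl⟩ := hg b
  exact D.comm_pow _ _ (D.comm_pow _ _ (Commute.refl _) i).symm j

lemma sq_mul (D : StData R G) (hc : ∀ a b, Commute (D.h a) (D.h b)) (s b : Rˣ) (hs : IsSquare s) :
    D.h (s * b) = D.h s * D.h b := by
  obtain ⟨a, rfl⟩ := hs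
  have := D.h_conj_h a b
  rw [(hc a b).eq, mul_inv_cancel_right, eq_mul_inv_iff_mul_eq] at this
  rw [← this, (hc _ _).eq]

lemma cyclic_nonsq {H : Type} [CommGroup H] (g : H) (hg : ∀ x, ∃ i : ℕ, g ^ i = x) (a b : H)
    (ha : ¬ IsSquare a) (hb : ¬ IsSquare b) : IsSquare (a * b) := by
  obtain ⟨i, rfl⟩ := hg a
  obtain ⟨j, rfl⟩ := hg b
  have hi : Odd i := by
    rw [← Nat.not_even_iff_odd]; exact fun h => ha (h.isSquare_pow g)
  have hj : Odd j := by
    rw [← Nat.not_even_iff_odd]; exact fun h => hb (h.isSquare_pow g)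
  rw [← pow_add]
  exact (hi.add_odd hj).isSquare_pow g

lemma hm_of_cyclic (D : StData R G) (g : Rˣ) (hg : ∀ x, ∃ i : ℕ, g ^ i = x)
    (hu : (∃ x : Rˣ, ¬ IsSquare x) → ∃ u u' : Rˣ, ¬ IsSquare u ∧ ¬ IsSquare u' ∧ (u : R) + u' = 1) (x y : Rˣ) :
    D.h (x * y) = D.h x * D.h y := by
  have hc := D.comm_all g hg
  by_cases hx : IsSquare x
  · exact D.sq_mul hc x y hx
  by_cases hy : IsSquare y
  · rw [mul_comm, D.sq_mul hc y x hy, (hc _ _).eq]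
  obtain ⟨u, u', hu1, hu2, huu⟩ := hu ⟨x, hx⟩
  have st := D.steinberg u u' huu
  have inv_ns : ∀ u : Rˣ, ¬ IsSquare u → ¬ IsSquare u⁻¹ := fun u hu h => hu (by simpa using h.inv)
  have hs := cyclic_nonsq g hg x u⁻¹ hx (inv_ns _ hu1)
  have hs' := cyclic_nonsq g hg y u'⁻¹ hy (inv_ns _ hu2)
  have e1 : D.h x = D.h (x * u⁻¹) * D.h u := by rw [← D.sq_mul hc _ _ hs]; simp
  have e2 : D.h y = D.h (y * u'⁻¹) * D.h u' := by rw [← D.sq_mul hc _ _ hs']; simp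
  have e3 : x * y = (x * u⁻¹) * ((y * u'⁻¹) * (u * u')) := by
    have : (x * u⁻¹) * ((y * u'⁻¹) * (u * u')) = x * y * (u * u⁻¹) * (u' * u'⁻¹) := by
      simp only [mul_assoc, mul_comm, mul_left_comm]
    rw [this]; simp
  rw [e3, D.sq_mul hc _ _ hs, D.sq_mul hc _ _ hs', ← st, e1, e2, mul_assoc]
  congr 1
  rw [← mul_assoc, (hc _ _).eq, mul_assoc]

lemma exists_nonsq (p : ℕ) (hp : p.Prime) (hp2 : p ≠ 2) (n : ℕ) (hx : ∃ x : (ZMod (p ^ (n+1)))ˣ, ¬ IsSquare x) :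
    ∃ u u' : (ZMod (p ^ (n+1)))ˣ, ¬ IsSquare u ∧ ¬ IsSquare u' ∧ (u : ZMod (p ^ (n+1))) + u' = 1 := by
  classical
  have : NeZero (p ^ (n+1)) := ⟨pow_ne_zero _ hp.ne_zero⟩
  have hex : ∃ k : ℕ, ∃ x : (ZMod (p ^ (n+1)))ˣ, ¬ IsSquare x ∧ (x : ZMod (p ^ (n+1))) = k := by
    obtain ⟨x, hx⟩ := hx
    exact ⟨(x : ZMod (p ^ (n+1))).val, x, hx, by simp⟩
  obtain ⟨x, hxs, hxk⟩ := Nat.find_spec hex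
  have hmin := fun m => Nat.find_min hex (m := m)
  generalize Nat.find hex = k at *
  have hk0 : k ≠ 0 := by
    rintro rfl
    have : Fact (1 < p ^ (n+1)) := ⟨Nat.one_lt_pow (by simp) hp.one_lt⟩
    simp at hxk
  obtain ⟨m, rfl⟩ := Nat.exists_eq_succ_of_ne_zero hk0
  have hmu : IsUnit ((m : ℕ) : ZMod (p ^ (n+1))) := by
    rw [ZMod.isUnit_iff_coprime]
    refine Nat.Coprime.pow_right _ ?_
    rw [Nat.coprime_comm, hp.coprime_iff_not_dvd]
    intro hdvd
    apply hxs
    have h1 : ((p : ℕ) : ℤ) ∣ (m.succ : ℤ) - 1 := by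
      push_cast; simpa using (Int.natCast_dvd_natCast.mpr hdvd)
    have h2 := dvd_sub_pow_of_dvd_sub h1 n
    have h3 : x ^ (p ^ n) = 1 := by
      ext; push_cast; rw [hxk]
      have := (ZMod.intCast_zmod_eq_zero_iff_dvd ((m.succ : ℤ) ^ p ^ n - 1 ^ p ^ n) (p ^ (n+1))).mpr (by exact_mod_cast h2)
      push_cast at this
      rw [one_pow, sub_eq_zero] at this
      push_cast
      exact this
    have hodd : Odd (p ^ n) := (hp.odd_of_ne_two hp2).pow
    have : x = x ^ (p ^ n + 1) := by rw [pow_succ x, h3, one_mul]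
    rw [this]
    exact (hodd.add_odd odd_one).isSquare_pow x
  obtain ⟨y, hy⟩ := hmu
  have hys : IsSquare y := by
    by_contra h
    exact hmin m (Nat.lt_succ_self m) ⟨y, h, hy⟩
  refine ⟨x⁻¹, y * x⁻¹, fun h => hxs (by simpa using h.inv), fun h => hxs ?_, ?_⟩
  · have := (h.inv.mul hys)
    simpa using this
  · have : (x : ZMod (p ^ (n+1))) * ((x⁻¹ : (ZMod (p ^ (n+1)))ˣ) : ZMod (p ^ (n+1))) = 1 := by simp
    push_cast
    push_cast at hxk
    rw [hy]
    rw [hxk] at this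
    linear_combination this

lemma inj_odd_prime_pow (p : ℕ) (hp : p.Prime) (hp2 : p ≠ 2) (n : ℕ) (D : StData (ZMod (p ^ (n + 1))) G) : D.Inj := by
  have := Fact.mk hp
  have := zmod_local p (n + 1) (by simp)
  have : NeZero (p ^ (n+1)) := ⟨pow_ne_zero _ hp.ne_zero⟩
  have hcyc := ZMod.isCyclic_units_of_prime_pow p hp hp2 (n + 1)
  obtain ⟨g, hg⟩ := hcyc.exists_generator
  apply inj_of_local
  apply D.hm_of_cyclic g
  · intro x
    have := hg x
    rw [← mem_powers_iff_mem_zpowers] at this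
    exact this
  · exact exists_nonsq p hp hp2 n

lemma inj_odd (m : ℕ) (hm : Odd m) : ∀ {G : Type} [Group G] (D : StData (ZMod m) G), D.Inj := by
  induction m using Nat.recOnPosPrimePosCoprime with
  | prime_pow p n hp hn =>
    intro G _ D
    obtain ⟨n, rfl⟩ := Nat.exists_eq_succ_of_ne_zero hn.ne'
    apply inj_odd_prime_pow p hp
    rintro rfl
    exact absurd hm (by simp [Nat.odd_pow_iff])
  | zero => exact absurd hm (by decide)
  | one =>
    intro G _ D
    exact D.inj_of_subsingleton
  | coprime a b ha hb hab iha ihb =>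
    intro G _ D
    rw [Nat.odd_mul] at hm
    apply inj_of_comap D (ZMod.chineseRemainder hab).symm
    apply inj_prod
    · exact iha hm.1 _
    · exact ihb hm.2 _

/-! powers of two -/

lemma three_pow (k : ℕ) : ∃ m : ℤ, Odd m ∧ (3 : ℤ) ^ (2 ^ (k + 1)) = 1 + 2 ^ (k + 3) * m := by
  induction k with
  | zero => exact ⟨1, by decide, by norm_num⟩
  | succ k ih =>
    obtain ⟨m, hm, h⟩ := ih
    refine ⟨m + 2 ^ (k + 2) * m ^ 2, ?_, ?_⟩
    · refine hm.add_even ?_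
      rw [pow_succ]; exact (even_two.mul_left _).mul_right _
    · rw [pow_succ 2 (k + 1), pow_mul, h]; ring

lemma units_two_pow (e : ℕ) (x : ℤ) (hx : Odd x) : ∃ i : ℕ, ((2 : ℤ) ^ e ∣ x - 3 ^ i) ∨ ((2 : ℤ) ^ e ∣ x + 3 ^ i) := by
  have base : ∃ i : ℕ, ((2 : ℤ) ^ 3 ∣ x - 3 ^ i) ∨ ((2 : ℤ) ^ 3 ∣ x + 3 ^ i) := by
    obtain ⟨y, rfl⟩ := hx
    have : y % 4 = 0 ∨ y % 4 = 1 ∨ y % 4 = 2 ∨ y % 4 = 3 := by omega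
    rcases this with h | h | h | h
    · exact ⟨0, Or.inl (by norm_num; omega)⟩
    · exact ⟨1, Or.inl (by norm_num; omega)⟩
    · exact ⟨1, Or.inr (by norm_num; omega)⟩
    · exact ⟨0, Or.inr (by norm_num; omega)⟩
  by_cases he : e ≤ 3
  · obtain ⟨i, h⟩ := base
    exact ⟨i, h.imp (fun h => (pow_dvd_pow 2 he).trans h) (fun h => (pow_dvd_pow 2 he).trans h)⟩
  obtain ⟨k, rfl⟩ : ∃ k, e = k + 3 := ⟨e - 3, by omega⟩
  clear he
  induction k with
  | zero => exact base
  | succ k ih =>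
    obtain ⟨i, hi⟩ := ih
    obtain ⟨m, ⟨m', hm⟩, h3⟩ := three_pow k
    have h3i : ∃ q : ℤ, (3 : ℤ) ^ i = 2 * q + 1 := (Odd.pow (by decide : Odd (3 : ℤ)))
    obtain ⟨q, hq⟩ := h3i
    have e3 : (3 : ℤ) ^ (i + 2 ^ (k + 1)) = 3 ^ i * (1 + 2 ^ (k + 3) * m) := by rw [pow_add, h3]
    rcases hi with ⟨c, hc⟩ | ⟨c, hc⟩
    · rcases Int.even_or_odd c with ⟨d, hd⟩ | ⟨d, hd⟩
      · exact ⟨i, Or.inl ⟨d, by rw [hc, hd]; ring⟩⟩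
      · refine ⟨i + 2 ^ (k + 1), Or.inl ⟨d - m' - q * m, ?_⟩⟩
        rw [e3]
        have : x = 3 ^ i + 2 ^ (k + 3) * (2 * d + 1) := by rw [← hd]; linear_combination hc
        rw [this, mul_add, mul_one, hq, hm]; ring
    · rcases Int.even_or_odd c with ⟨d, hd⟩ | ⟨d, hd⟩
      · exact ⟨i, Or.inr ⟨d, by rw [hc, hd]; ring⟩⟩
      · refine ⟨i + 2 ^ (k + 1), Or.inr ⟨d + m' + 1 + q * m, ?_⟩⟩
        rw [e3]
        have : x = - 3 ^ i + 2 ^ (k + 3) * (2 * d + 1) := by rw [← hd]; linear_combination hc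
        rw [this, mul_add, mul_one, hq, hm]; ring

lemma units_two_pow' (e : ℕ) (r : (ZMod (2 ^ e))ˣ) (hr : (r : ZMod (2 ^ e)) * 3 = 1) (he : e ≠ 0) (x : (ZMod (2 ^ e))ˣ) :
    ∃ i : ℕ, x = r ^ i ∨ x = - r ^ i := by
  have : NeZero (2 ^ e) := ⟨pow_ne_zero _ two_ne_zero⟩
  obtain ⟨k, hk⟩ : ∃ k : ℕ, ((x⁻¹ : (ZMod (2 ^ e))ˣ) : ZMod (2 ^ e)) = k := ⟨_, (ZMod.natCast_zmod_val _).symm⟩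
  have hodd : Odd (k : ℤ) := by
    have : IsUnit (k : ZMod (2 ^ e)) := hk ▸ (x⁻¹).isUnit
    rw [ZMod.isUnit_iff_coprime] at this
    rw [Int.odd_coe_nat, ← Nat.coprime_two_right]
    exact Nat.Coprime.coprime_dvd_right (dvd_pow_self 2 he) this
  obtain ⟨i, hi⟩ := units_two_pow e k hodd
  have hx1 : (x : ZMod (2 ^ e)) * k = 1 := by rw [← hk]; simp
  have hri : (r : ZMod (2 ^ e)) ^ i * 3 ^ i = 1 := by rw [← mul_pow, hr, one_pow]
  refine ⟨i, ?_⟩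
  rcases hi with h | h
  · left
    have := (ZMod.intCast_zmod_eq_zero_iff_dvd ((k : ℤ) - 3 ^ i) (2 ^ e)).mpr (by exact_mod_cast h)
    push_cast at this
    ext; push_cast
    linear_combination (r : ZMod (2 ^ e)) ^ i * hx1 - x * hri - (r : ZMod (2 ^ e)) ^ i * x * this
  · right
    have := (ZMod.intCast_zmod_eq_zero_iff_dvd ((k : ℤ) + 3 ^ i) (2 ^ e)).mpr (by exact_mod_cast h)
    push_cast at this
    ext; push_cast
    linear_combination -(r : ZMod (2 ^ e)) ^ i * hx1 - x * hri + (r : ZMod (2 ^ e)) ^ i * x * this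

/-- multiplicativity from powers of `r` and `-1` -/
lemma hm_of_gen (D : StData R G) (r : Rˣ) (hr : ∀ i : ℕ, D.h (r ^ i) = D.h r ^ i) (hn : D.h (-1) ^ 2 = 1)
    (hper : ∃ k : ℕ, 0 < k ∧ r ^ k = 1)
    (hg : ∀ x : Rˣ, ∃ i : ℕ, x = r ^ i ∨ x = - r ^ i) (x y : Rˣ) : D.h (x * y) = D.h x * D.h y := by
  obtain ⟨k, hk, hrk⟩ := hper
  have hinv : ∀ i : ℕ, ∃ j : ℕ, (r ^ i)⁻¹ = r ^ j := by
    intro i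
    refine ⟨(k - 1) * i, ?_⟩
    rw [inv_eq_iff_mul_eq_one, ← pow_add]
    have : i + (k - 1) * i = k * i := by
      obtain ⟨k, rfl⟩ := Nat.exists_eq_succ_of_ne_zero hk.ne'
      simp; ring
    rw [this, pow_mul, hrk, one_pow]
  have hinv' : ∀ i j : ℕ, (r ^ i)⁻¹ = r ^ j → (D.h (r ^ i))⁻¹ = D.h (r ^ j) := by
    intro i j h
    have h1 : r ^ (i + j) = 1 := by rw [pow_add, ← h, mul_inv_cancel]
    rw [inv_eq_iff_mul_eq_one, hr, hr, ← pow_add, ← hr, h1, h_one]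
  have ct : ∀ x, D.h (-1) * D.t x = D.t x * D.h (-1) := fun x => by simpa using D.h_t (-1) x
  have cl : ∀ x, D.h (-1) * D.l x = D.l x * D.h (-1) := fun x => by simpa using D.h_l (-1) x
  have cen := D.central_h (D.h (-1)) ct cl
  have hneg : ∀ i : ℕ, D.h (- r ^ i) = D.h (-1) * D.h (r ^ i) := by
    intro i
    obtain ⟨j, hj⟩ := hinv i
    have hj' : (r ^ j)⁻¹ = r ^ i := by rw [← hj, inv_inv]
    rw [← hj', h_neg_inv, hj', hinv' j i hj']
  obtain ⟨i, hi⟩ := hg x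
  obtain ⟨j, hj⟩ := hg y
  have key : D.h (r ^ i * r ^ j) = D.h (r ^ i) * D.h (r ^ j) := by
    rw [← pow_add, hr, hr, hr, pow_add]
  have hneg2 : D.h (- (r ^ i * r ^ j)) = D.h (-1) * (D.h (r ^ i) * D.h (r ^ j)) := by
    rw [← key, ← pow_add]; exact hneg _
  rcases hi with rfl | rfl <;> rcases hj with rfl | rfl
  · exact key
  · rw [mul_neg, hneg2, hneg, ← mul_assoc, cen, mul_assoc]
  · rw [neg_mul, hneg2, hneg, mul_assoc]
  · rw [neg_mul_neg, key, hneg, hneg, mul_assoc, ← mul_assoc (D.h (r ^ i)), ← cen, mul_assoc, ← mul_assoc (D.h (-1)) (D.h (-1)),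
      ← pow_two, hn, one_mul]

end StData

namespace StData

variable {R : Type} [CommRing R] {R₁ : Type} [CommRing R₁] {R₂ : Type} [CommRing R₂] {G : Type} [Group G]

lemma comap_h (D : StData R G) (f : R₁ ≃+* R) (v : R₁ˣ) : (D.comap f).h v = D.h (Units.map (f : R₁ →* R) v) := by
  simp [h, w, comap]

lemma h_pow_fst (D : StData (R₁ × R₂) G) (h2 : D.snd.Inj) (a : R₁ˣ) (b : R₂ˣ)
    (hr : ∀ i : ℕ, D.h ((MulEquiv.prodUnits.symm (a, b)) ^ i) = D.h (MulEquiv.prodUnits.symm (a, b)) ^ i) (i : ℕ) :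
    D.fst.h (a ^ i) = D.fst.h a ^ i := by
  have h1 := hr i
  rw [← map_pow, Prod.pow_mk, h_prod, h_prod] at h1
  have c : Commute (D.fst.h a) (D.snd.h b) := D.comm_fst_snd _ (D.fst.h_mem a) _ (D.snd.h_mem b)
  rw [c.mul_pow] at h1
  have h3 : D.snd.h (b ^ i) = D.snd.h b ^ i := by
    clear h1
    induction i with
    | zero => simp [h_one]
    | succ i ih => rw [pow_succ, h2.hm, ih, pow_succ]
  rw [h3] at h1
  exact mul_right_cancel h1

lemma h_neg_fst (D : StData (R₁ × R₂) G) (h2 : D.snd.Inj) (hn : D.h (-1) ^ 2 = 1) :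
    D.fst.h (-1) ^ 2 = 1 := by
  have e : (-1 : (R₁ × R₂)ˣ) = MulEquiv.prodUnits.symm (-1, -1) := by
    ext <;> rfl
  rw [e, h_prod] at hn
  have c : Commute (D.fst.h (-1)) (D.snd.h (-1)) := D.comm_fst_snd _ (D.fst.h_mem _) _ (D.snd.h_mem _)
  rw [c.mul_pow] at hn
  have : D.snd.h (-1) ^ 2 = 1 := by
    rw [pow_two, ← h2.hm]; simp [h_one]
  simpa [this] using hn

lemma inj_three (N : ℕ) (hN : N ≠ 0) (D : StData (ZMod N) G) (r : (ZMod N)ˣ) (hr3 : (r : ZMod N) * 3 = 1)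
    (hr : ∀ i : ℕ, D.h (r ^ i) = D.h r ^ i) (hn : D.h (-1) ^ 2 = 1) : D.Inj := by
  obtain ⟨e, m, hm, rfl⟩ := Nat.exists_eq_two_pow_mul_odd hN
  rcases Nat.eq_zero_or_pos e with rfl | he
  · exact inj_odd _ (by simpa using hm) D
  have hcop : Nat.Coprime (2 ^ e) m := Nat.Coprime.pow_left _ (by rwa [Nat.coprime_two_left])
  set f := (ZMod.chineseRemainder hcop).symm
  apply inj_of_comap D f
  set D' := D.comap f
  have h2 : D'.snd.Inj := inj_odd m hm _
  apply inj_prod _ _ h2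
  have : Fact (Nat.Prime 2) := ⟨Nat.prime_two⟩
  have := zmod_local 2 e he.ne'
  have : NeZero (2 ^ e) := ⟨pow_ne_zero _ two_ne_zero⟩
  apply inj_of_local
  set r' := Units.map (f.symm : ZMod (2 ^ e * m) →* ZMod (2 ^ e) × ZMod m) r
  have hfr : Units.map (f : ZMod (2 ^ e) × ZMod m →* ZMod (2 ^ e * m)) r' = r := by
    ext; simp [r']
  obtain ⟨⟨a, b⟩, hab⟩ := MulEquiv.prodUnits.symm.surjective r'
  have ha : (a : ZMod (2 ^ e)) * 3 = 1 := by
    have h1 : (r' : ZMod (2 ^ e) × ZMod m) * 3 = 1 := by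
      have : f.symm ((r : ZMod (2 ^ e * m)) * 3) = f.symm 1 := by rw [hr3]
      rw [map_mul, map_one] at this
      rw [← this]; congr 1
      exact (map_ofNat f.symm 3).symm
    rw [← hab] at h1
    exact congrArg Prod.fst h1
  apply D'.fst.hm_of_gen a
  · apply D'.h_pow_fst h2 a b
    intro i
    rw [hab, comap_h, comap_h, map_pow, hfr, hr]
  · apply D'.h_neg_fst h2
    rw [comap_h]
    have : Units.map (f : ZMod (2 ^ e) × ZMod m →* ZMod (2 ^ e * m)) (-1) = -1 := by ext; simp
    rw [this, hn]
  · exact ⟨orderOf a, orderOf_pos a, pow_orderOf_eq_one a⟩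
  · exact units_two_pow' e a ha he.ne'

end StData

namespace StData
set_option linter.unusedSimpArgs false

abbrev SLZ := Matrix.SpecialLinearGroup (Fin 2) ℤ

def Sm : SLZ := ⟨!![0, -1; 1, 0], by norm_num [Matrix.det_fin_two_of]⟩

lemma SLZ.ext4 (A B : SLZ) (h1 : A 0 0 = B 0 0) (h2 : A 0 1 = B 0 1) (h3 : A 1 0 = B 1 0) (h4 : A 1 1 = B 1 1) : A = B := by
  apply Subtype.ext
  ext i j; fin_cases i <;> fin_cases j
  · exact h1
  · exact h2
  · exact h3
  · exact h4

lemma mul00 (A B : SLZ) : (A * B) 0 0 = A 0 0 * B 0 0 + A 0 1 * B 1 0 := by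
  rw [Matrix.SpecialLinearGroup.coe_mul, Matrix.mul_apply, Fin.sum_univ_two]
lemma mul01 (A B : SLZ) : (A * B) 0 1 = A 0 0 * B 0 1 + A 0 1 * B 1 1 := by
  rw [Matrix.SpecialLinearGroup.coe_mul, Matrix.mul_apply, Fin.sum_univ_two]
lemma mul10 (A B : SLZ) : (A * B) 1 0 = A 1 0 * B 0 0 + A 1 1 * B 1 0 := by
  rw [Matrix.SpecialLinearGroup.coe_mul, Matrix.mul_apply, Fin.sum_univ_two]
lemma mul11 (A B : SLZ) : (A * B) 1 1 = A 1 0 * B 0 1 + A 1 1 * B 1 1 := by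
  rw [Matrix.SpecialLinearGroup.coe_mul, Matrix.mul_apply, Fin.sum_univ_two]

section entries
variable {R : Type} [CommRing R] (x : R)
@[simp] lemma Tm00 : (Tm x) 0 0 = 1 := rfl
@[simp] lemma Tm01 : (Tm x) 0 1 = x := rfl
@[simp] lemma Tm10 : (Tm x) 1 0 = 0 := rfl
@[simp] lemma Tm11 : (Tm x) 1 1 = 1 := rfl
@[simp] lemma Lm00 : (Lm x) 0 0 = 1 := rfl
@[simp] lemma Lm01 : (Lm x) 0 1 = 0 := rfl
@[simp] lemma Lm10 : (Lm x) 1 0 = x := rfl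
@[simp] lemma Lm11 : (Lm x) 1 1 = 1 := rfl
@[simp] lemma Sm00 : Sm 0 0 = 0 := rfl
@[simp] lemma Sm01 : Sm 0 1 = -1 := rfl
@[simp] lemma Sm10 : Sm 1 0 = 1 := rfl
@[simp] lemma Sm11 : Sm 1 1 = 0 := rfl
end entries

lemma Tm_add (x y : ℤ) : Tm (x + y) = Tm x * Tm y := by
  apply SLZ.ext4 <;> simp [mul00, mul01, mul10, mul11, add_comm]

lemma Lm_add (x y : ℤ) : Lm (x + y) = Lm x * Lm y := by
  apply SLZ.ext4 <;> simp [mul00, mul01, mul10, mul11]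

lemma Tm_zpow (x : ℤ) : Tm x = Tm 1 ^ x := by
  induction x using Int.induction_on with
  | zero => apply SLZ.ext4 <;> simp
  | succ i ih => rw [zpow_add_one, Tm_add, ih]
  | pred i ih =>
    rw [zpow_sub_one, ← ih, eq_mul_inv_iff_mul_eq, ← Tm_add]; simp

lemma Tm_zero : Tm (0 : ℤ) = 1 := by simpa using Tm_zpow 0

lemma Sm_Lm (c : ℤ) : Sm * Lm c = Tm (-c) * Sm := by
  apply SLZ.ext4 <;> simp [mul00, mul01, mul10, mul11]

lemma Lm_eq (c : ℤ) : Lm c = Sm⁻¹ * Tm (-c) * Sm := by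
  rw [mul_assoc, ← Sm_Lm, inv_mul_cancel_left]

lemma Lm_zpow (x : ℤ) : Lm x = Lm 1 ^ x := by
  have e : Lm (1 : ℤ) = Sm⁻¹ * Tm (-1) * Sm⁻¹⁻¹ := by rw [inv_inv]; exact Lm_eq 1
  rw [Lm_eq, e, conj_zpow, inv_inv, Tm_zpow (-x), Tm_zpow (-1)]
  rw [← zpow_mul]; simp

lemma small_rep (a m : ℤ) (hm : m ≠ 0) : ∃ x : ℤ, 2 * |a + x * m| ≤ |m| := by
  have h1 := Int.emod_nonneg a hm
  have h2 := Int.emod_lt_abs a hm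
  have h3 := Int.emod_add_mul_ediv a m
  by_cases h : 2 * (a % m) ≤ |m|
  · refine ⟨-(a / m), ?_⟩
    have : a + -(a / m) * m = a % m := by linear_combination -h3
    rw [this, abs_of_nonneg h1]; exact h
  · refine ⟨-(a / m) - m.sign, ?_⟩
    have : a + (-(a / m) - m.sign) * m = a % m - |m| := by
      rw [← Int.sign_mul_self_eq_abs]
      linear_combination -h3
    rw [this, abs_of_nonpos (by linarith)]; linarith

lemma descent (p : ℕ) (hp : p = 2 ∨ p = 3) (K : Subgroup (SLZ × SLZ))
    (hT : (Tm 1, Tm (p : ℤ)) ∈ K) (hL : (Lm (p : ℤ), Lm 1) ∈ K) (hneg : ((-1 : SLZ), (-1 : SLZ)) ∈ K)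
    (n : ℕ) : ∀ A B : SLZ, (B 1 0).natAbs = n → A 0 0 = B 0 0 → A 1 1 = B 1 1 → A 1 0 = p * B 1 0 → B 0 1 = p * A 0 1 →
      (A, B) ∈ K := by
  have hT' : ∀ x : ℤ, (Tm x, Tm (p * x)) ∈ K := by
    intro x
    have := K.zpow_mem hT x
    rw [Prod.pow_mk, ← Tm_zpow, Tm_zpow p, ← zpow_mul, ← Tm_zpow] at this
    exact this
  have hL' : ∀ x : ℤ, (Lm (p * x), Lm x) ∈ K := by
    intro x
    have := K.zpow_mem hL x
    rw [Prod.pow_mk, ← Lm_zpow, Lm_zpow p, ← zpow_mul, ← Lm_zpow] at this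
    exact this
  have hp0 : (p : ℤ) = 2 ∨ (p : ℤ) = 3 := by rcases hp with rfl | rfl <;> simp
  induction n using Nat.strong_induction_on with
  | _ n ih =>
  intro A B hn h00 h11 h10 h01
  have hdet := det_eq A
  rcases Nat.eq_zero_or_pos n with rfl | hpos
  · have hc : B 1 0 = 0 := by simpa using hn
    rw [h10, hc, mul_zero, mul_zero, sub_zero] at hdet
    rcases Int.mul_eq_one_iff_eq_one_or_neg_one.mp hdet with ⟨ha, hd⟩ | ⟨ha, hd⟩
    · have := hT' (A 0 1)
      have e1 : A = Tm (A 0 1) := by apply SLZ.ext4 <;> simp [ha, hd, h10, hc]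
      have e2 : B = Tm (p * A 0 1) := by apply SLZ.ext4 <;> simp [← h00, ← h11, h01, ha, hd, hc]
      have e3 : (A, B) = (Tm (A 0 1), Tm (p * A 0 1)) := Prod.ext e1 e2
      rw [e3]; exact this
    · have := K.mul_mem hneg (hT' (-(A 0 1)))
      have e1 : A = -1 * Tm (-(A 0 1)) := by
        rw [neg_one_mul]
        apply SLZ.ext4 <;> simp [ha, hd, h10, hc]
      have e2 : B = -1 * Tm (p * -(A 0 1)) := by
        rw [neg_one_mul]
        apply SLZ.ext4 <;> simp [← h00, ← h11, h01, ha, hd, hc]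
      have e3 : (A, B) = (-1 * Tm (-(A 0 1)), -1 * Tm (p * -(A 0 1))) := Prod.ext e1 e2
      rw [e3]; exact this
  · have hc : B 1 0 ≠ 0 := by
      intro h; rw [h] at hn; simp at hn; omega
    have hpc : (p : ℤ) * B 1 0 ≠ 0 := mul_ne_zero (by rcases hp0 with h | h <;> rw [h] <;> norm_num) hc
    obtain ⟨x, hx⟩ := small_rep (A 0 0) (p * B 1 0) hpc
    set a' := A 0 0 + x * (p * B 1 0) with ha'
    have ha0 : a' ≠ 0 := by
      intro h0
      have : (p : ℤ) * (-(x * B 1 0 * A 1 1) - A 0 1 * B 1 0) = 1 := by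
        rw [h10] at hdet
        linear_combination hdet + A 1 1 * ha' - A 1 1 * h0
      have := Int.isUnit_iff.mp (IsUnit.of_mul_eq_one _ this)
      rcases hp0 with h | h <;> rw [h] at this <;> norm_num at this
    obtain ⟨y, hy⟩ := small_rep (B 1 0) a' ha0
    have habs : |(p : ℤ) * B 1 0| ≤ 3 * |B 1 0| := by
      rw [abs_mul]
      rcases hp0 with h | h <;> rw [h] <;> norm_num
      have := abs_nonneg (B 1 0); linarith
    have hlt : |B 1 0 + y * a'| < |B 1 0| := by
      have := abs_pos.mpr hc
      linarith
    have hmem : (Lm (p * y) * Tm x, Lm y * Tm (p * x)) ∈ K := K.mul_mem (hL' y) (hT' x)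
    have key : (Lm (p * y) * Tm x * A, Lm y * Tm (p * x) * B) ∈ K := by
      have hB10 : (Lm y * Tm (p * x) * B) 1 0 = B 1 0 + y * a' := by
        simp only [mul00, mul01, mul10, mul11, Tm00, Tm01, Tm10, Tm11, Lm00, Lm01, Lm10, Lm11]
        rw [ha', h00]; ring
      refine ih ((Lm y * Tm (p * x) * B) 1 0).natAbs ?_ _ _ rfl ?_ ?_ ?_ ?_
      · rw [hB10, ← hn]; zify; exact hlt
      all_goals
        simp only [mul00, mul01, mul10, mul11, Tm00, Tm01, Tm10, Tm11, Lm00, Lm01, Lm10, Lm11]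
        simp only [h00, h11, h10, h01]
        try ring
    have := K.mul_mem (K.inv_mem hmem) key
    simpa [mul_assoc] using this

section
variable {H : Type} [Group H]

lemma Sm_sq : Sm * Sm = -1 := by
  apply SLZ.ext4 <;> simp [mul00, mul01, mul10, mul11]

lemma theta_rel (ρ : SLZ →* H) (p : ℕ) (hp : p = 2 ∨ p = 3) (θ : H →* H) (g : H) 
    (hθT : θ (ρ (Tm 1)) = ρ (Tm 1) ^ p) (hθS : θ (ρ Sm) = g * ρ Sm) (hgS : g * ρ Sm * g = ρ Sm) (hgT : g * ρ (Tm 1) * g⁻¹ = ρ (Tm 1) ^ (p ^ 2))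
    (A B : SLZ) (h00 : A 0 0 = B 0 0) (h11 : A 1 1 = B 1 1) (h10 : A 1 0 = p * B 1 0) (h01 : B 0 1 = p * A 0 1) :
    θ (ρ A) = ρ B := by
  let K : Subgroup (SLZ × SLZ) :=
    MonoidHom.eqLocus ((θ.comp ρ).comp (MonoidHom.fst SLZ SLZ)) (ρ.comp (MonoidHom.snd SLZ SLZ))
  refine descent p hp K ?_ ?_ ?_ _ A B rfl h00 h11 h10 h01
  · change θ (ρ (Tm 1)) = ρ (Tm p)
    rw [hθT, Tm_zpow p, map_zpow]; simp
  · change θ (ρ (Lm p)) = ρ (Lm 1)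
    rw [Lm_eq, Lm_eq, Tm_zpow, Tm_zpow (-1)]
    simp only [map_mul, map_inv, map_zpow]
    rw [hθT, hθS]
    have e : ρ (Tm 1) = g⁻¹ * ρ (Tm 1) ^ (p ^ 2) * g := by rw [← hgT]; group
    conv_rhs => rw [e]
    have e2 : g⁻¹ * ρ (Tm 1) ^ p ^ 2 * g = g⁻¹ * ρ (Tm 1) ^ p ^ 2 * g⁻¹⁻¹ := by rw [inv_inv]
    rw [e2, conj_zpow, inv_inv, ← zpow_natCast, ← zpow_natCast, ← zpow_mul, ← zpow_mul]
    have e3 : (p : ℤ) * -(p : ℤ) = ((p ^ 2 : ℕ) : ℤ) * -1 := by push_cast; ring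
    rw [e3]; group
  · change θ (ρ (-1)) = ρ (-1)
    rw [← Sm_sq, map_mul, map_mul, hθS, ← mul_assoc, hgS]

lemma theta_rel_iter (ρ : SLZ →* H) (p : ℕ) (hp : p = 2 ∨ p = 3) (θ : H →* H) (g : H) 
    (hθT : θ (ρ (Tm 1)) = ρ (Tm 1) ^ p) (hθS : θ (ρ Sm) = g * ρ Sm) (hgS : g * ρ Sm * g = ρ Sm) (hgT : g * ρ (Tm 1) * g⁻¹ = ρ (Tm 1) ^ (p ^ 2))
    (i : ℕ) : ∀ (A B : SLZ) (_ : A 0 0 = B 0 0) (_ : A 1 1 = B 1 1)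
    (_ : A 1 0 = (p : ℤ) ^ i * B 1 0) (_ : B 0 1 = (p : ℤ) ^ i * A 0 1), θ^[i] (ρ A) = ρ B := by
  induction i with
  | zero =>
    intro A B h00 h11 h10 h01
    have : A = B := by apply SLZ.ext4 <;> simp [*]
    simp [this]
  | succ i ih =>
    intro A B h00 h11 h10 h01
    let C : SLZ := ⟨!![A 0 0, p * A 0 1; (p : ℤ) ^ i * B 1 0, A 1 1], by
      rw [Matrix.det_fin_two_of]
      have := det_eq A
      rw [h10] at this
      linear_combination this⟩
    rw [Function.iterate_succ_apply, theta_rel ρ p hp θ g hθT hθS hgS hgT A C]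
    · apply ih C B
      · exact h00
      · exact h11
      · rfl
      · rw [h01]; change _ = (p : ℤ) ^ i * (p * A 0 1); ring
    · rfl
    · rfl
    · rw [h10]; change _ = (p : ℤ) * ((p : ℤ) ^ i * B 1 0); ring
    · rfl

lemma theta_T (ρ : SLZ →* H) (p : ℕ) (θ : H →* H) 
    (hθT : θ (ρ (Tm 1)) = ρ (Tm 1) ^ p)
    (i : ℕ) : θ^[i] (ρ (Tm 1)) = ρ (Tm 1) ^ (p ^ i) := by
  induction i with
  | zero => simp
  | succ i ih => rw [Function.iterate_succ_apply', ih, map_pow, hθT, ← pow_mul, ← pow_succ']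

lemma theta_S (ρ : SLZ →* H) (θ : H →* H) (g : H) 
    (hθS : θ (ρ Sm) = g * ρ Sm) (hθg : θ g = g)
    (i : ℕ) : θ^[i] (ρ Sm) = g ^ i * ρ Sm := by
  induction i with
  | zero => simp
  | succ i ih => rw [Function.iterate_succ_apply', ih, map_mul, map_pow, hθS, hθg, ← mul_assoc, ← pow_succ]

lemma SLZ_closure : Subgroup.closure {Sm, Tm 1} = (⊤ : Subgroup SLZ) := by
  have := SpecialLinearGroup.SL2Z_generators
  exact this

lemma ext_SLZ {H : Type} [Group H] (f f' : SLZ →* H) (hS : f Sm = f' Sm) (hT : f (Tm 1) = f' (Tm 1)) : f = f' := by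
  apply MonoidHom.eq_of_eqOn_dense SLZ_closure
  rintro x (rfl | rfl)
  · exact hS
  · exact hT

lemma theta_hom (θ : H →* H) (i : ℕ) : ∃ f : H →* H, ∀ x, f x = θ^[i] x := by
  induction i with
  | zero => exact ⟨MonoidHom.id H, fun x => rfl⟩
  | succ i ih =>
    obtain ⟨f, hf⟩ := ih
    exact ⟨f.comp θ, fun x => by simp [hf]⟩

lemma theta_period (ρ : SLZ →* H) (p : ℕ) (θ : H →* H) (g : H) 
    (hθT : θ (ρ (Tm 1)) = ρ (Tm 1) ^ p) (hθS : θ (ρ Sm) = g * ρ Sm) (hθg : θ g = g)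
    (k : ℕ) (hg : g ^ k = 1) (hT : ρ (Tm 1) ^ (p ^ k) = ρ (Tm 1)) (A : SLZ) : θ^[k] (ρ A) = ρ A := by
  obtain ⟨f, hf⟩ := theta_hom θ k
  have : f.comp ρ = ρ := by
    apply ext_SLZ
    · simp only [MonoidHom.comp_apply, hf, theta_S ρ θ g hθS hθg, hg, one_mul]
    · simp only [MonoidHom.comp_apply, hf, theta_T ρ p θ hθT, hT]
  rw [← hf, ← MonoidHom.comp_apply, this]

lemma main_lemma (ρ : SLZ →* H) (p : ℕ) (hp : p = 2 ∨ p = 3) (θ : H →* H) (g : H) 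
    (hθT : θ (ρ (Tm 1)) = ρ (Tm 1) ^ p) (hθS : θ (ρ Sm) = g * ρ Sm) (hθg : θ g = g) (hgS : g * ρ Sm * g = ρ Sm) (hgT : g * ρ (Tm 1) * g⁻¹ = ρ (Tm 1) ^ (p ^ 2))
    (k : ℕ) (hg : g ^ k = 1) (hT : ρ (Tm 1) ^ (p ^ k) = ρ (Tm 1)) (A : SLZ) (hA : A 0 0 = (p : ℤ) ^ k) :
    ρ A = ρ (Lm (A 1 0)) * ρ (Tm (A 0 1)) := by
  have h1 := theta_period ρ p θ g hθT hθS hθg k hg hT (Sm * A)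
  have hdet := det_eq A
  rw [hA] at hdet
  rw [theta_rel_iter ρ p hp θ g hθT hθS hgS hgT k (Sm * A) (Tm (-(A 1 0)) * Sm * Tm (A 0 1))] at h1
  · rw [Lm_eq, map_mul, map_mul, mul_assoc, map_inv, mul_assoc, eq_inv_mul_iff_mul_eq, ← map_mul, ← h1]
    simp only [map_mul, mul_assoc]
  all_goals simp [mul00, mul01, mul10, mul11, hA]
  linarith

end
end StData

namespace StData
set_option linter.unusedSimpArgs false

lemma wz_split (N : ℕ) (hN : N ≠ 0) (D : ℕ) : 0 < D → ∃ W Z : ℕ, D = W * Z ∧ Nat.Coprime Z N ∧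
    ∀ q, Nat.Coprime q N → Nat.Coprime W q := by
  induction D using Nat.strong_induction_on with
  | _ D ih =>
  intro hD
  by_cases h : Nat.gcd D N = 1
  · exact ⟨1, D, by simp, h, fun q _ => by simp⟩
  · obtain ⟨D', hD'⟩ := Nat.gcd_dvd_left D N
    have hd : 0 < Nat.gcd D N := Nat.gcd_pos_of_pos_left _ hD
    have hD0 : 0 < D' := by
      rcases Nat.eq_zero_or_pos D' with h0 | h0
      · rw [h0] at hD'; omega
      · exact h0
    have hlt : D' < D := by
      rw [hD']
      have : 2 ≤ Nat.gcd D N := by omega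
      nlinarith
    obtain ⟨W, Z, h1, h2, h3⟩ := ih D' hlt hD0
    refine ⟨Nat.gcd D N * W, Z, by rw [mul_assoc, ← h1]; exact hD', h2, fun q hq => ?_⟩
    apply Nat.Coprime.mul_left _ (h3 q hq)
    exact (Nat.Coprime.coprime_dvd_right (Nat.gcd_dvd_right D N) hq).symm

lemma number_lemma (U v N : ℕ) (hU : 1 < U) (hv : 0 < v) (hN : 0 < N) (hUv : Nat.Coprime U v) (hUN : Nat.Coprime U N)
    (hvN : Nat.Coprime v N) :
    ∃ (s t0 v' : ℤ) (j : ℕ), v' * v = 1 + s ∧ (N : ℤ) ∣ s ∧ IsCoprime t0 (N : ℤ) ∧ 1 - s * v * t0 = (U : ℤ) ^ j := by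
  have hj : 0 < Nat.totient (v * N) := Nat.totient_pos.mpr (Nat.mul_pos hv hN)
  set j0 := Nat.totient (v * N) with hj0
  have hmod : U ^ j0 ≡ 1 [MOD v * N] := Nat.ModEq.pow_totient (Nat.Coprime.mul_right hUv hUN)
  have hU0 : 1 < U ^ j0 := Nat.one_lt_pow hj.ne' hU
  have hdvd : v * N ∣ U ^ j0 - 1 := (Nat.modEq_iff_dvd' hU0.le).mp hmod.symm
  obtain ⟨W, Z, hWZ, hZ, hW⟩ := wz_split N hN.ne' (U ^ j0 - 1) (by omega)
  have hvZ : v ∣ Z := by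
    have h1 : v ∣ W * Z := hWZ ▸ (Dvd.dvd.trans (Dvd.intro _ rfl) hdvd)
    exact Nat.Coprime.dvd_of_dvd_mul_left (hW v hvN).symm h1
  have hNW : N ∣ W := by
    have h1 : N ∣ W * Z := hWZ ▸ (Dvd.dvd.trans (Dvd.intro_left _ rfl) hdvd)
    exact Nat.Coprime.dvd_of_dvd_mul_right hZ.symm h1
  obtain ⟨Z', rfl⟩ := hvZ
  -- choose m
  have hm : ∃ m : ℕ, (v : ℤ) ∣ m * W + 1 := by
    have hc : IsCoprime (W : ℤ) (v : ℤ) := Nat.isCoprime_iff_coprime.mpr (hW v hvN)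
    obtain ⟨a, b, hab⟩ := hc
    have hv0 : (v : ℤ) ≠ 0 := by exact_mod_cast hv.ne'
    refine ⟨((-a) % v).toNat, ?_⟩
    rw [Int.toNat_of_nonneg (Int.emod_nonneg _ hv0)]
    have h3 := Int.emod_add_mul_ediv (-a) v
    refine ⟨b - ((-a) / v) * W, ?_⟩
    linear_combination (W : ℤ) * h3 - hab
  obtain ⟨m, hm⟩ := hm
  set M : ℤ := ∑ i ∈ Finset.range m, ((U : ℤ) ^ j0) ^ i with hM
  have hgeom : M * ((U : ℤ) ^ j0 - 1) = ((U : ℤ) ^ j0) ^ m - 1 := geom_sum_mul _ _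
  have hWZ' : (U : ℤ) ^ j0 - 1 = W * (v * Z') := by
    have : U ^ j0 = W * (v * Z') + 1 := by omega
    have h2 : ((U ^ j0 : ℕ) : ℤ) = ((W * (v * Z') + 1 : ℕ) : ℤ) := by rw [this]
    push_cast at h2
    linarith
  have hMm : (v : ℤ) ∣ M - m := by
    have : M - m = ∑ i ∈ Finset.range m, (((U : ℤ) ^ j0) ^ i - 1) := by
      rw [Finset.sum_sub_distrib]; simp [hM]
    rw [this]
    apply Finset.dvd_sum
    intro i _
    have h1 : ((U : ℤ) ^ j0 - 1) ∣ ((U : ℤ) ^ j0) ^ i - 1 := by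
      simpa using sub_dvd_pow_sub_pow ((U : ℤ) ^ j0) 1 i
    refine Dvd.dvd.trans ?_ h1
    rw [hWZ']
    exact ⟨W * Z', by ring⟩
  have hs : (v : ℤ) ∣ 1 + W * M := by
    have : (1 : ℤ) + W * M = (m * W + 1) + W * (M - m) := by ring
    rw [this]
    exact dvd_add hm (hMm.mul_left _)
  obtain ⟨v', hv'⟩ := hs
  refine ⟨W * M, -Z', v', j0 * m, ?_, ?_, ?_, ?_⟩
  · rw [hv', mul_comm]
  · exact Dvd.dvd.mul_right (Int.natCast_dvd_natCast.mpr hNW) _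
  · apply IsCoprime.neg_left
    apply Nat.isCoprime_iff_coprime.mpr
    exact Nat.Coprime.coprime_mul_left hZ
  · rw [pow_mul]
    rw [hWZ'] at hgeom
    linear_combination hgeom

lemma exists_mul_of_gcd_dvd (N : ℕ) (W a : ℤ) (h : (Int.gcd W N : ℤ) ∣ a) : ∃ α : ℤ, (a : ZMod N) = α * W := by
  obtain ⟨c, hc⟩ := h
  have hb := Int.gcd_eq_gcd_ab W N
  refine ⟨Int.gcdA W N * c, ?_⟩
  rw [hc, hb]
  push_cast
  simp; ring

lemma idem_split (N U : ℕ) (hN : 0 < N) (hU : 1 < U) (hUN : N ∣ U - 1) (e : ZMod N) (he : e * e = e) :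
    ∃ X Y : ℤ, 1 + X * Y = U ∧ (∃ α : ℤ, e = α * X) ∧ (∃ β : ℤ, 1 - e = β * Y) := by
  obtain ⟨a, rfl⟩ := ZMod.intCast_surjective e
  have hdiv : (N : ℤ) ∣ a * (a - 1) := by
    rw [← ZMod.intCast_zmod_eq_zero_iff_dvd]
    push_cast
    linear_combination he
  set N1 := Int.gcd a N with hN1
  set N2 := Int.gcd (a - 1) N with hN2
  have haa : IsCoprime a (a - 1) := ⟨1, -1, by ring⟩
  have h12 : Nat.Coprime N2 N1 := by
    apply Nat.isCoprime_iff_coprime.mp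
    exact (IsCoprime.of_isCoprime_of_dvd_left (IsCoprime.of_isCoprime_of_dvd_right haa (Int.gcd_dvd_left _ _)) (Int.gcd_dvd_left _ _)).symm
  have hN10 : N1 ≠ 0 := by
    intro h
    rw [hN1, Int.gcd_eq_zero_iff] at h
    have := h.2; omega
  obtain ⟨W, Z, h1, h2, h3⟩ := wz_split N1 hN10 (U - 1) (by omega)
  have hW2 := h3 N2 h12
  refine ⟨W, Z, ?_, ?_, ?_⟩
  · have : U = 1 + W * Z := by omega
    rw [this]; push_cast; ring
  · apply exists_mul_of_gcd_dvd
    have hd : (Int.gcd (W : ℤ) N : ℤ) ∣ a * (a - 1) := (Int.gcd_dvd_right _ _).trans hdiv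
    refine IsCoprime.dvd_of_dvd_mul_right ?_ hd
    rw [Int.isCoprime_iff_gcd_eq_one, ← Nat.dvd_one]
    have : Nat.gcd W N2 = 1 := hW2
    rw [← this]
    apply Nat.dvd_gcd
    · exact Int.natCast_dvd_natCast.mp ((Int.gcd_dvd_left _ _).trans (Int.gcd_dvd_left _ _))
    · apply Int.dvd_gcd
      · exact Int.gcd_dvd_right _ _
      · exact (Int.gcd_dvd_left _ _).trans (Int.gcd_dvd_right _ _)
  · have : (1 : ZMod N) - (a : ZMod N) = ((1 - a : ℤ) : ZMod N) := by push_cast; rfl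
    rw [this]
    apply exists_mul_of_gcd_dvd
    have hd : (Int.gcd (Z : ℤ) N : ℤ) ∣ a * (a - 1) := (Int.gcd_dvd_right _ _).trans hdiv
    have : (Int.gcd (Z : ℤ) N : ℤ) ∣ a - 1 := by
      refine IsCoprime.dvd_of_dvd_mul_left ?_ hd
      rw [Int.isCoprime_iff_gcd_eq_one, ← Nat.dvd_one]
      have : Nat.gcd Z N1 = 1 := h2
      rw [← this]
      apply Nat.dvd_gcd
      · exact Int.natCast_dvd_natCast.mp ((Int.gcd_dvd_left _ _).trans (Int.gcd_dvd_left _ _))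
      · apply Int.dvd_gcd
        · exact Int.gcd_dvd_right _ _
        · exact (Int.gcd_dvd_left _ _).trans (Int.gcd_dvd_right _ _)
    rw [← dvd_neg] at this
    simpa using this

end StData

namespace StData
set_option linter.unusedSimpArgs false
set_option linter.unusedVariables false

variable {H : Type} [Group H]

lemma rho_Tm_congr (ρ : SLZ →* H) (N : ℕ) (hTN : ρ (Tm 1) ^ N = 1) (a b : ℤ) (h : (a : ZMod N) = b) :
    ρ (Tm a) = ρ (Tm b) := by
  rw [ZMod.intCast_eq_intCast_iff_dvd_sub] at h
  obtain ⟨c, hc⟩ := h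
  have : b = N * c + a := by linarith
  rw [this, Tm_zpow, Tm_zpow (N * c + a), zpow_add, zpow_mul, map_mul, map_zpow, map_zpow, map_zpow]
  simp [hTN]

lemma rho_Lm_congr (ρ : SLZ →* H) (N : ℕ) (hTN : ρ (Tm 1) ^ N = 1) (a b : ℤ) (h : (a : ZMod N) = b) :
    ρ (Lm a) = ρ (Lm b) := by
  rw [Lm_eq, Lm_eq, map_mul, map_mul, map_mul, map_mul, rho_Tm_congr ρ N hTN (-a) (-b) (by push_cast; rw [h])]

def tz (ρ : SLZ →* H) (N : ℕ) (x : ZMod N) : H := ρ (Tm (x.cast : ℤ))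
def lz (ρ : SLZ →* H) (N : ℕ) (x : ZMod N) : H := ρ (Lm (x.cast : ℤ))

lemma tz_cast (ρ : SLZ →* H) (N : ℕ) (hTN : ρ (Tm 1) ^ N = 1) (a : ℤ) : tz ρ N a = ρ (Tm a) := by
  apply rho_Tm_congr ρ N hTN; simp

lemma lz_cast (ρ : SLZ →* H) (N : ℕ) (hTN : ρ (Tm 1) ^ N = 1) (a : ℤ) : lz ρ N a = ρ (Lm a) := by
  apply rho_Lm_congr ρ N hTN; simp

lemma rho_Tm_zpow (ρ : SLZ →* H) (a b : ℤ) : ρ (Tm a) ^ b = ρ (Tm (a * b)) := by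
  rw [← map_zpow, Tm_zpow a, ← zpow_mul, ← Tm_zpow]

lemma rho_Lm_zpow (ρ : SLZ →* H) (a b : ℤ) : ρ (Lm a) ^ b = ρ (Lm (a * b)) := by
  rw [← map_zpow, Lm_zpow a, ← zpow_mul, ← Lm_zpow]

/-- corner property -/
def Corner (ρ : SLZ →* H) (U : ℕ) : Prop :=
  ∀ (j : ℕ) (A : SLZ), A 0 0 = (U : ℤ) ^ j → ρ A = ρ (Lm (A 1 0)) * ρ (Tm (A 0 1))

lemma comm_of_corner (ρ : SLZ →* H) (N U : ℕ) (hN : 0 < N) (hTN : ρ (Tm 1) ^ N = 1) (hU : 1 < U) (hUN : N ∣ U - 1)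
    (hc : Corner ρ U) (e x y : ZMod N) (he : e * e = e) :
    tz ρ N (e * x) * lz ρ N ((1 - e) * y) = lz ρ N ((1 - e) * y) * tz ρ N (e * x) := by
  obtain ⟨X, Y, hXY, ⟨α, hα⟩, ⟨β, hβ⟩⟩ := idem_split N U hN hU hUN e he
  obtain ⟨x, rfl⟩ := ZMod.intCast_surjective x
  obtain ⟨y, rfl⟩ := ZMod.intCast_surjective y
  have h1 : e * x = ((X * (α * x) : ℤ) : ZMod N) := by rw [hα]; push_cast; ring
  have h2 : (1 - e) * y = ((Y * (β * y) : ℤ) : ZMod N) := by rw [hβ]; push_cast; ring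
  rw [h1, h2, tz_cast ρ N hTN, lz_cast ρ N hTN, ← rho_Tm_zpow, ← rho_Lm_zpow]
  have key : ρ (Tm X) * ρ (Lm Y) = ρ (Lm Y) * ρ (Tm X) := by
    have := hc 1 (Tm X * Lm Y) (by simp [mul00, hXY])
    rw [map_mul] at this
    rw [this]
    simp [mul10, mul01]
  exact Commute.zpow_zpow (show Commute _ _ from key) _ _

lemma wt_of_corner (ρ : SLZ →* H) (N p k : ℕ) (hN : 0 < N) (hTN : ρ (Tm 1) ^ N = 1) (hp : 1 < p) (hk : 0 < k)
    (hpN : Nat.Coprime p N)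
    (hc : Corner ρ (p ^ k)) (v : (ZMod N)ˣ) (x : ZMod N) :
    (tz ρ N v * lz ρ N (-((v⁻¹ : (ZMod N)ˣ) : ZMod N)) * tz ρ N v) * tz ρ N x =
      lz ρ N (-(((v⁻¹ : (ZMod N)ˣ) : ZMod N) * ((v⁻¹ : (ZMod N)ˣ) : ZMod N) * x)) *
        (tz ρ N v * lz ρ N (-((v⁻¹ : (ZMod N)ˣ) : ZMod N)) * tz ρ N v) := by
  have : NeZero N := ⟨hN.ne'⟩
  obtain ⟨v', hv1, hv2⟩ := Nat.chineseRemainder hpN 1 ((v⁻¹ : (ZMod N)ˣ) : ZMod N).val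
  have hvN : ((v' : ℕ) : ZMod N) = ((v⁻¹ : (ZMod N)ˣ) : ZMod N) := by
    rw [(ZMod.natCast_eq_natCast_iff _ _ _).mpr hv2]; simp
  have hvp : Nat.Coprime v' p := by
    have := hv1.gcd_eq
    rw [Nat.Coprime, this]; simp
  have hv0 : 0 < v' := by
    rcases Nat.eq_zero_or_pos v' with h | h
    · rw [h, Nat.coprime_zero_left] at hvp; omega
    · exact h
  have hvN' : Nat.Coprime v' N := by
    rw [← ZMod.isUnit_iff_coprime, hvN]; exact Units.isUnit _
  obtain ⟨s, t0, vv, j, e1, e2, e3, e4⟩ := number_lemma (p ^ k) v' N (Nat.one_lt_pow hk.ne' hp) hv0 hN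
    (hvp.symm.pow_left k) (hpN.pow_left k) hvN'
  have es : (s : ZMod N) = 0 := (ZMod.intCast_zmod_eq_zero_iff_dvd _ _).mpr e2
  have evv : (v : ZMod N) = (vv : ℤ) := by
    have h := congrArg (Int.cast : ℤ → ZMod N) e1
    push_cast at h
    rw [hvN, es, add_zero] at h
    rw [← mul_one (v : ZMod N), ← h]
    rw [mul_comm, mul_assoc]; simp
  have evi : -((v⁻¹ : (ZMod N)ˣ) : ZMod N) = ((-(v' : ℤ) : ℤ) : ZMod N) := by
    push_cast; rw [hvN]
  obtain ⟨x', rfl⟩ := ZMod.intCast_surjective x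
  obtain ⟨a, b, hab⟩ := e3
  have hx : (x' : ZMod N) = ((t0 * (a * x') : ℤ) : ZMod N) := by
    have h := congrArg (Int.cast : ℤ → ZMod N) hab
    push_cast at h
    simp only [ZMod.natCast_self, mul_zero, add_zero] at h
    push_cast
    linear_combination (-(x' : ZMod N)) * h
  have hx2 : -(((v⁻¹ : (ZMod N)ˣ) : ZMod N) * ((v⁻¹ : (ZMod N)ˣ) : ZMod N) * (x' : ZMod N))
      = (((-(v' * v' * t0)) * (a * x') : ℤ) : ZMod N) := by
    rw [hx]; push_cast; rw [← hvN]; ring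
  rw [hx2, hx, evi, evv, tz_cast ρ N hTN, tz_cast ρ N hTN, lz_cast ρ N hTN, lz_cast ρ N hTN, ← rho_Tm_zpow, ← rho_Lm_zpow]
  rw [← map_mul, ← map_mul]
  set w := Tm vv * Lm (-(v' : ℤ)) * Tm vv with hw
  let A : SLZ := ⟨!![1 - s * v' * t0, s ^ 2 * t0; -(v' * v' * t0), 1 + s * v' * t0], by
    rw [Matrix.det_fin_two_of]; ring⟩
  have hA : w * Tm t0 = A * w := by
    apply SLZ.ext4 <;>
      simp only [hw, mul00, mul01, mul10, mul11, Tm00, Tm01, Tm10, Tm11, Lm00, Lm01, Lm10, Lm11]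
    · change _ = (1 - s * v' * t0) * _ + (s ^ 2 * t0) * _
      obtain rfl : s = vv * v' - 1 := by linarith
      ring
    · change _ = (1 - s * v' * t0) * _ + (s ^ 2 * t0) * _
      obtain rfl : s = vv * v' - 1 := by linarith
      ring
    · change _ = (-(v' * v' * t0)) * _ + (1 + s * v' * t0) * _
      obtain rfl : s = vv * v' - 1 := by linarith
      ring
    · change _ = (-(v' * v' * t0)) * _ + (1 + s * v' * t0) * _
      obtain rfl : s = vv * v' - 1 := by linarith
      ring
  have hρA : ρ A = ρ (Lm (-(v' * v' * t0))) := by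
    rw [hc j A e4]
    change ρ (Lm (-(v' * v' * t0))) * ρ (Tm (s ^ 2 * t0)) = _
    rw [rho_Tm_congr ρ N hTN (s ^ 2 * t0) 0 (by push_cast; rw [es]; ring), Tm_zero, map_one, mul_one]
  have key : SemiconjBy (ρ w) (ρ (Tm t0)) (ρ (Lm (-(v' * v' * t0)))) := by
    rw [SemiconjBy, ← map_mul, hA, map_mul, hρA]
  exact key.zpow_right _

def mkSt (ρ : SLZ →* H) (N p k : ℕ) (hN : 0 < N) (hTN : ρ (Tm 1) ^ N = 1) (hp : 1 < p) (hk : 0 < k)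
    (hpN : Nat.Coprime p N) (hUN : N ∣ p ^ k - 1)
    (hc : Corner ρ (p ^ k)) : StData (ZMod N) H where
  t := tz ρ N
  l := lz ρ N
  t_add := by
    intro x y
    obtain ⟨x, rfl⟩ := ZMod.intCast_surjective x
    obtain ⟨y, rfl⟩ := ZMod.intCast_surjective y
    rw [← Int.cast_add]
    simp only [tz_cast ρ N hTN]
    rw [Tm_add, map_mul]
  l_add := by
    intro x y
    obtain ⟨x, rfl⟩ := ZMod.intCast_surjective x
    obtain ⟨y, rfl⟩ := ZMod.intCast_surjective y
    rw [← Int.cast_add]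
    simp only [lz_cast ρ N hTN]
    rw [Lm_add, map_mul]
  wt := wt_of_corner ρ N p k hN hTN hp hk hpN hc
  comm := comm_of_corner ρ N (p ^ k) hN hTN (Nat.one_lt_pow hk.ne' hp) hUN hc

end StData

namespace StData
set_option linter.unusedSimpArgs false
set_option linter.unusedVariables false

lemma map_mem_Gam {H : Type} [Group H] (ρ : SLZ →* H) (N : ℕ) (hTN : ρ (Tm 1) ^ N = 1) (D : StData (ZMod N) H)
    (hDt : D.t = tz ρ N) (hDl : D.l = lz ρ N) (A : SLZ) :
    (Matrix.SpecialLinearGroup.map (Int.castRingHom (ZMod N)) A, ρ A) ∈ D.Gam := by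
  let f : SLZ →* (Matrix.SpecialLinearGroup (Fin 2) (ZMod N) × H) :=
    (Matrix.SpecialLinearGroup.map (Int.castRingHom (ZMod N))).prod ρ
  have hT : ∀ a : ℤ, f (Tm a) ∈ D.Gam := by
    intro a
    have : f (Tm a) = (Tm (a : ZMod N), D.t (a : ZMod N)) := by
      rw [hDt, tz_cast ρ N hTN]
      exact Prod.ext (map_Tm _ _) rfl
    rw [this]; exact D.Tm_mem _
  have hL : ∀ a : ℤ, f (Lm a) ∈ D.Gam := by
    intro a
    have : f (Lm a) = (Lm (a : ZMod N), D.l (a : ZMod N)) := by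
      rw [hDl, lz_cast ρ N hTN]
      exact Prod.ext (map_Lm _ _) rfl
    rw [this]; exact D.Lm_mem _
  have hS : Sm = Tm (-1) * Lm 1 * Tm (-1) := by
    apply SLZ.ext4 <;> simp [mul00, mul01, mul10, mul11]
  have : (⊤ : Subgroup SLZ) ≤ D.Gam.comap f := by
    rw [← SLZ_closure, Subgroup.closure_le]
    rintro x (rfl | rfl)
    · change f Sm ∈ D.Gam
      rw [hS, map_mul, map_mul]
      exact D.Gam.mul_mem (D.Gam.mul_mem (hT _) (hL _)) (hT _)
    · exact hT 1
  exact this (Subgroup.mem_top A)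

theorem abstract_main {H : Type} [Group H] (ρ : SLZ →* H) (p : ℕ) (hp : p = 2 ∨ p = 3) (θ : H →* H) (g : H)
    (hθT : θ (ρ (Tm 1)) = ρ (Tm 1) ^ p) (hθS : θ (ρ Sm) = g * ρ Sm) (hθg : θ g = g)
    (hgS : g * ρ Sm * g = ρ Sm) (hgT : g * ρ (Tm 1) * g⁻¹ = ρ (Tm 1) ^ (p ^ 2))
    (N : ℕ) (hN : 0 < N) (hTN : ρ (Tm 1) ^ N = 1) (hpN : ¬ p ∣ N) (m : ℕ) (hm : 0 < m) (hgm : g ^ m = 1)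
    (A : SLZ) (hA : Matrix.SpecialLinearGroup.map (Int.castRingHom (ZMod N)) A = 1) : ρ A = 1 := by
  have hpp : p.Prime := by rcases hp with rfl | rfl <;> norm_num
  have hcop : Nat.Coprime p N := (Nat.Prime.coprime_iff_not_dvd hpp).mpr hpN
  have hφ : 0 < Nat.totient N := Nat.totient_pos.mpr hN
  set k := m * Nat.totient N with hk
  have hk0 : 0 < k := Nat.mul_pos hm hφ
  have hmod : ∀ j, p ^ (k * j) ≡ 1 [MOD N] := by
    intro j
    have : k * j = Nat.totient N * (m * j) := by rw [hk]; ring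
    rw [this, pow_mul]
    simpa using (Nat.ModEq.pow_totient hcop).pow (m * j)
  have hTk : ∀ j, ρ (Tm 1) ^ (p ^ (k * j)) = ρ (Tm 1) := by
    intro j
    have h1 : orderOf (ρ (Tm 1)) ∣ N := orderOf_dvd_of_pow_eq_one hTN
    have := (pow_eq_pow_iff_modEq (x := ρ (Tm 1)) (n := p ^ (k * j)) (m := 1)).mpr ((hmod j).of_dvd h1)
    simpa using this
  have hc : Corner ρ (p ^ k) := by
    intro j A hA
    refine main_lemma ρ p hp θ g hθT hθS hθg hgS hgT (k * j) ?_ (hTk j) A ?_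
    · rw [hk, mul_assoc, pow_mul, hgm, one_pow]
    · rw [hA]; push_cast; rw [← pow_mul]
  have hUN : N ∣ p ^ k - 1 := by
    have := hmod 1
    rw [mul_one] at this
    exact (Nat.modEq_iff_dvd' (Nat.one_le_pow _ _ hpp.pos)).mp this.symm
  let D := mkSt ρ N p k hN hTN hpp.one_lt hk0 hcop hUN hc
  have hDt : ∀ a : ℤ, D.t a = ρ (Tm a) := tz_cast ρ N hTN
  have hDl : ∀ a : ℤ, D.l a = ρ (Lm a) := lz_cast ρ N hTN
  suffices hinj : D.Inj by
    apply hinj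
    have := map_mem_Gam ρ N hTN D rfl rfl A
    rwa [hA] at this
  rcases hp with hp2 | hp3
  · apply inj_odd
    rw [← Nat.not_even_iff_odd, even_iff_two_dvd, ← hp2]; exact hpN
  -- p = 3
  let P : (ZMod N)ˣ := ZMod.unitOfCoprime p hcop
  have hP : (P : ZMod N) = p := ZMod.coe_unitOfCoprime p hcop
  have hwm1 : D.w (-1) = ρ Sm := by
    have : D.w (-1) = D.t ((-1 : ℤ) : ZMod N) * D.l ((1 : ℤ) : ZMod N) * D.t ((-1 : ℤ) : ZMod N) := by
      simp [w]
    rw [this, hDt, hDl, ← map_mul, ← map_mul]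
    congr 1
    apply SLZ.ext4 <;> simp [mul00, mul01, mul10, mul11]
  have hz : ∀ B, ρ (-1) * ρ B = ρ B * ρ (-1) := by
    intro B; rw [← map_mul, ← map_mul]; simp
  have hSS : ρ Sm * ρ Sm = ρ (-1) := by rw [← map_mul, Sm_sq]
  have hzz : ρ (-1) * ρ (-1) = 1 := by rw [← map_mul]; simp
  have hγS : ∀ i : ℕ, g ^ i * ρ Sm * g ^ i = ρ Sm := by
    intro i
    induction i with
    | zero => simp
    | succ i ih =>
      calc g ^ (i + 1) * ρ Sm * g ^ (i + 1) = g ^ i * (g * ρ Sm * g) * g ^ i := by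
            rw [pow_succ]; nth_rewrite 2 [← pow_succ]; rw [pow_succ']; simp only [mul_assoc]
        _ = _ := by rw [hgS, ih]
  have hγT : ∀ (i : ℕ), g ^ i * ρ (Tm 1) * (g ^ i)⁻¹ = ρ (Tm 1) ^ (p ^ (2 * i)) := by
    intro i
    induction i with
    | zero => simp
    | succ i ih =>
      calc g ^ (i + 1) * ρ (Tm 1) * (g ^ (i + 1))⁻¹ = g * (g ^ i * ρ (Tm 1) * (g ^ i)⁻¹) * g⁻¹ := by
            rw [pow_succ']; simp only [mul_assoc, mul_inv_rev]
        _ = (g * ρ (Tm 1) * g⁻¹) ^ (p ^ (2 * i)) := by rw [ih, conj_pow]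
        _ = _ := by rw [hgT, ← pow_mul]; congr 1; ring
  have hh : ∀ i : ℕ, D.h ((P⁻¹) ^ i) = (g ^ i)⁻¹ := by
    intro i
    set γ := g ^ i with hγ
    set v : (ZMod N)ˣ := (P⁻¹) ^ i with hv
    obtain ⟨b, hb⟩ := ZMod.intCast_surjective (v : ZMod N)
    have hvi : ((v⁻¹ : (ZMod N)ˣ) : ZMod N) = ((p : ℤ) ^ i : ℤ) := by
      rw [hv, inv_pow, inv_inv]; push_cast; rw [hP]
    have hvb : (p : ZMod N) ^ i * (b : ZMod N) = 1 := by
      have : ((v⁻¹ : (ZMod N)ˣ) : ZMod N) * v = 1 := by simp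
      rw [hvi, ← hb] at this
      push_cast at this; exact this
    have hTP : ρ (Tm ((p : ℤ) ^ i)) = ρ (Tm 1) ^ (p ^ i) := by
      rw [Tm_zpow, map_zpow, ← zpow_natCast]; push_cast; rfl
    -- conjugation
    have hconj : γ * ρ (Tm b) = ρ (Tm ((p : ℤ) ^ i)) * γ := by
      have h1 : γ * ρ (Tm b) * γ⁻¹ = ρ (Tm ((p : ℤ) ^ (2 * i) * b)) := by
        rw [Tm_zpow b, map_zpow, ← conj_zpow, hγT i, ← zpow_natCast, ← zpow_mul, Tm_zpow (_ * b), map_zpow]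
        push_cast; rfl
      rw [mul_inv_eq_iff_eq_mul] at h1
      rw [h1]
      congr 1
      apply rho_Tm_congr ρ N hTN
      push_cast
      linear_combination ((p : ZMod N) ^ i) * hvb
    -- apply theta
    have hrel : Sm * Tm 1 * (Sm * Tm 1) * (Sm * Tm 1) = Sm * Sm := by
      apply SLZ.ext4 <;> simp [mul00, mul01, mul10, mul11]
    obtain ⟨f, hf⟩ := theta_hom θ i
    have h2 := congrArg (fun B => f (ρ B)) hrel
    simp only [map_mul] at h2
    simp only [hf, theta_S ρ θ g hθS hθg, theta_T ρ p θ hθT] at h2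
    rw [← hTP, ← hγ] at h2
    have hDh : D.h v = ρ (Tm b) * ρ (Lm (-(p : ℤ) ^ i)) * ρ (Tm b) * ρ Sm := by
      rw [h, hwm1, w, hvi, ← hb, hDt, ← Int.cast_neg, hDl]
    have hLS : ρ Sm * ρ (Tm ((p : ℤ) ^ i)) = ρ (Lm (-(p : ℤ) ^ i)) * ρ Sm := by
      rw [← map_mul, ← map_mul]; congr 1
      apply SLZ.ext4 <;> simp [mul00, mul01, mul10, mul11]
    have hgs := hγS i
    rw [← hγ] at hgs
    rw [hDh]
    set S := ρ Sm
    set T := ρ (Tm ((p : ℤ) ^ i))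
    set t := ρ (Tm b)
    set L := ρ (Lm (-(p : ℤ) ^ i))
    have h3 : S * (t * S * γ * t * L) * S = S * 1 * S := by
      calc S * (t * S * γ * t * L) * S = S * t * S * γ * t * (L * S) := by simp only [mul_assoc]
        _ = (γ * S * γ) * t * S * γ * t * (S * T) := by rw [hLS, hgs]
        _ = γ * S * (γ * t) * S * (γ * t) * (S * T) := by simp only [mul_assoc]
        _ = γ * S * T * (γ * S * T) * (γ * S * T) := by rw [hconj]; simp only [mul_assoc]
        _ = γ * S * (γ * S) := h2
        _ = γ * S * γ * S := by simp only [mul_assoc]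
        _ = S * 1 * S := by rw [hgs, mul_one]
    have h4 : (t * S) * (γ * t * L) = 1 := by
      have := mul_left_cancel (mul_right_cancel h3)
      rw [← this]; simp only [mul_assoc]
    have h5 : γ * t * L * (t * S) = 1 := mul_eq_one_comm.mp h4
    apply eq_inv_of_mul_eq_one_right
    rw [← h5]; simp only [mul_assoc]
  refine inj_three N hN.ne' D P⁻¹ ?_ ?_ ?_
  · have : ((P⁻¹ : (ZMod N)ˣ) : ZMod N) * P = 1 := by simp
    rw [hP, hp3] at this; exact_mod_cast this
  · intro i
    have := hh 1
    rw [pow_one, pow_one] at this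
    rw [hh, this, inv_pow]
  · rw [h, hwm1, hSS, pow_two, hzz]

end StData

namespace StData

lemma signed_perm_aux {Φ : Type} [Fintype Φ] [DecidableEq Φ] (g : Equiv.Perm Φ) (ε : Φ → ℂ)
    (hε : ∀ a, ε a = 1 ∨ ε a = -1) (G : Matrix Φ Φ ℂ) (hG : ∀ (X : Matrix Φ Φ ℂ) a c, (G * X) a c = ε a * X (g a) c)
    (k : ℕ) : ∀ a, ∃ s : ℂ, s * s = 1 ∧ ∀ (X : Matrix Φ Φ ℂ) c, (G ^ k * X) a c = s * X ((g ^ k) a) c := by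
  induction k with
  | zero => intro a; exact ⟨1, by simp, by simp⟩
  | succ k ih =>
    intro a
    obtain ⟨s, hs, h⟩ := ih (g a)
    refine ⟨ε a * s, ?_, ?_⟩
    · rcases hε a with h1 | h1 <;> rw [h1] <;> linear_combination hs
    · intro X c
      rw [pow_succ', Matrix.mul_assoc, hG, h, pow_succ, Equiv.Perm.mul_apply]; ring

lemma signed_perm_order {Φ : Type} [Fintype Φ] [DecidableEq Φ] (g : Equiv.Perm Φ) (ε : Φ → ℂ)
    (hε : ∀ a, ε a = 1 ∨ ε a = -1) (G : Matrix Φ Φ ℂ) (hG : ∀ (X : Matrix Φ Φ ℂ) a c, (G * X) a c = ε a * X (g a) c) :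
    G ^ (orderOf g + orderOf g) = 1 := by
  ext a c
  obtain ⟨s, hs, h⟩ := signed_perm_aux g ε hε G hG (orderOf g) a
  rw [pow_add, h, pow_orderOf_eq_one, Equiv.Perm.one_apply]
  have := h 1 c
  rw [mul_one, pow_orderOf_eq_one, Equiv.Perm.one_apply] at this
  rw [this, ← mul_assoc, hs, one_mul]

end StData


/-- congruence subgroup criterion. Let `(S,T)` be modular data, `N` the
exact order of `T`, and `ρ : SL₂(ℤ) → GL(Φ,ℂ)` the representation sending the standard
generators to `S` and `T`. If `p ∈ {2,3}` does not divide `N` and there are a permutation `g`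
of `Φ`, signs `ε`, and a ring automorphism `τ` of `ℂ` with
`τ (S a b) = ε a · S (g a) b = ε b · S a (g b)`, `τ (T a a) = T a a ^ p`, and
`T (g a) (g a) = T a a ^ (p²)`, then `ρ A = 1` for every `A ∈ SL₂(ℤ)` with `A ≡ I (mod N)`;
i.e. `ρ` factors through `Γ(N)` and defines a representation of `SL₂(ℤ/Nℤ)`. -/
theorem modularData_congruence_subgroup
    {Φ : Type} [Fintype Φ] [DecidableEq Φ] (M : ModularData Φ)
    (n : ℕ) (hn : 0 < n) (hTn : M.T ^ n = 1)
    (hmin : ∀ m : ℕ, 0 < m → M.T ^ m = 1 → n ≤ m)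
    (ρ : Matrix.SpecialLinearGroup (Fin 2) ℤ →* Matrix.GeneralLinearGroup Φ ℂ)
    (hρS : ((ρ ⟨!![0, -1; 1, 0], by norm_num [Matrix.det_fin_two_of]⟩ :
        Matrix.GeneralLinearGroup Φ ℂ) : Matrix Φ Φ ℂ) = M.S)
    (hρT : ((ρ ⟨!![1, 1; 0, 1], by norm_num [Matrix.det_fin_two_of]⟩ :
        Matrix.GeneralLinearGroup Φ ℂ) : Matrix Φ Φ ℂ) = M.T)
    (p : ℕ) (hp : p = 2 ∨ p = 3) (hpn : ¬ p ∣ n)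
    (g : Equiv.Perm Φ) (ε : Φ → ℂ) (hε : ∀ a, ε a = 1 ∨ ε a = -1)
    (τ : ℂ ≃+* ℂ)
    (hτS : ∀ a b, τ (M.S a b) = ε a * M.S (g a) b ∧ τ (M.S a b) = ε b * M.S a (g b))
    (hτT : ∀ a, τ (M.T a a) = M.T a a ^ p)
    (hgT : ∀ a, M.T (g a) (g a) = M.T a a ^ (p ^ 2)) :
    ∀ A : Matrix.SpecialLinearGroup (Fin 2) ℤ,
      (∀ i j, ((A : Matrix (Fin 2) (Fin 2) ℤ) i j) ≡
        ((1 : Matrix (Fin 2) (Fin 2) ℤ) i j) [ZMOD (n : ℤ)]) →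
      ρ A = 1 := by
  intro A hA
  let G : Matrix Φ Φ ℂ := Matrix.of fun a c => if g a = c then ε a else 0
  have hεε : ∀ a, ε a * ε a = 1 := by
    intro a; rcases hε a with h | h <;> rw [h] <;> norm_num
  have hGmul : ∀ (X : Matrix Φ Φ ℂ) a c, (G * X) a c = ε a * X (g a) c := by
    intro X a c
    rw [Matrix.mul_apply]
    simp [G]
  have hGGt : G * G.transpose = 1 := by
    ext a c
    rw [hGmul, Matrix.transpose_apply]
    by_cases h : a = c
    · subst h; simp [G, hεε]
    · have h' : ¬ g c = g a := fun h2 => h (g.injective h2).symm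
      simp [G, h, h']
  have hGtG : G.transpose * G = 1 := mul_eq_one_comm.mp hGGt
  let Gu : Matrix.GeneralLinearGroup Φ ℂ := ⟨G, G.transpose, hGGt, hGtG⟩
  have hGS : G * M.S * G = M.S := by
    have h1 : ∀ a b, ε a * M.S (g a) b = ε b * M.S a (g b) := fun a b => (hτS a b).1.symm.trans (hτS a b).2
    have h2 : G * M.S = M.S * G.transpose := by
      ext a b
      rw [hGmul, h1, Matrix.mul_apply]
      simp [G, mul_comm]
    rw [h2, Matrix.mul_assoc, hGtG, Matrix.mul_one]
  have hTd : M.T = Matrix.diagonal (fun a => M.T a a) := by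
    ext a b
    by_cases h : a = b
    · subst h; simp
    · rw [M.T_diag a b h, Matrix.diagonal_apply_ne _ h]
  have hTpow : ∀ k : ℕ, M.T ^ k = Matrix.diagonal (fun a => M.T a a ^ k) := by
    intro k
    conv_lhs => rw [hTd]
    rw [Matrix.diagonal_pow]; rfl
  have hGT : G * M.T = M.T ^ (p ^ 2) * G := by
    ext a c
    rw [hGmul, hTpow, Matrix.diagonal_mul]
    by_cases h : g a = c
    · subst h; simp [G, hgT, mul_comm]
    · rw [M.T_diag _ _ h]; simp [G, h]
  have hGord := StData.signed_perm_order g ε hε G hGmul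
  refine StData.abstract_main ρ p hp (Matrix.GeneralLinearGroup.map (τ : ℂ →+* ℂ)) Gu ?_ ?_ ?_ ?_ ?_ n hn ?_ hpn
    (orderOf g + orderOf g) ?_ ?_ A ?_
  · apply Units.ext
    change ((ρ (StData.Tm 1) : Matrix.GeneralLinearGroup Φ ℂ) : Matrix Φ Φ ℂ).map τ = ((ρ (StData.Tm 1) ^ p : Matrix.GeneralLinearGroup Φ ℂ) : Matrix Φ Φ ℂ)
    rw [Units.val_pow_eq_pow_val]
    have hρT' : ((ρ (StData.Tm 1) : Matrix.GeneralLinearGroup Φ ℂ) : Matrix Φ Φ ℂ) = M.T := hρT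
    rw [hρT', hTpow]
    ext a b
    rw [Matrix.map_apply]
    by_cases h : a = b
    · subst h; simp [hτT]
    · rw [M.T_diag a b h, Matrix.diagonal_apply_ne _ h, map_zero]
  · apply Units.ext
    change ((ρ StData.Sm : Matrix.GeneralLinearGroup Φ ℂ) : Matrix Φ Φ ℂ).map τ = G * ((ρ StData.Sm : Matrix.GeneralLinearGroup Φ ℂ) : Matrix Φ Φ ℂ)
    have hρS' : ((ρ StData.Sm : Matrix.GeneralLinearGroup Φ ℂ) : Matrix Φ Φ ℂ) = M.S := hρS
    rw [hρS']
    ext a b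
    rw [Matrix.map_apply, hGmul, (hτS a b).1]
  · apply Units.ext
    change G.map τ = G
    ext a b
    rw [Matrix.map_apply]
    change τ (if g a = b then ε a else 0) = (if g a = b then ε a else 0)
    split_ifs
    · rcases hε a with h | h <;> rw [h] <;> simp
    · simp
  · apply Units.ext
    change G * ((ρ StData.Sm : Matrix.GeneralLinearGroup Φ ℂ) : Matrix Φ Φ ℂ) * G = ((ρ StData.Sm : Matrix.GeneralLinearGroup Φ ℂ) : Matrix Φ Φ ℂ)
    have hρS' : ((ρ StData.Sm : Matrix.GeneralLinearGroup Φ ℂ) : Matrix Φ Φ ℂ) = M.S := hρS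
    rw [hρS', hGS]
  · rw [mul_inv_eq_iff_eq_mul]
    apply Units.ext
    have hρT' : ((ρ (StData.Tm 1) : Matrix.GeneralLinearGroup Φ ℂ) : Matrix Φ Φ ℂ) = M.T := hρT
    rw [Units.val_mul, Units.val_mul, Units.val_pow_eq_pow_val, hρT']
    exact hGT
  · apply Units.ext
    have hρT' : ((ρ (StData.Tm 1) : Matrix.GeneralLinearGroup Φ ℂ) : Matrix Φ Φ ℂ) = M.T := hρT
    rw [Units.val_pow_eq_pow_val, hρT', hTn]; rfl
  · have := orderOf_pos g
    omega
  · apply Units.ext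
    rw [Units.val_pow_eq_pow_val]
    exact hGord
  · apply Subtype.ext
    ext i j
    change ((A i j : ℤ) : ZMod n) = (1 : Matrix (Fin 2) (Fin 2) (ZMod n)) i j
    rw [(ZMod.intCast_eq_intCast_iff _ _ _).mpr (hA i j)]
    fin_cases i <;> fin_cases j <;> simp
end

section
/- Let (S,T) be modular data on Φ. Then for all a, b ∈ Φ, the b-th column of S is an eigenvector of the fusion matrix N_a with eigenvalue S_{ab}/S_{0b}, i.e. ∑_{c∈Φ} N_{ae}^c S_{cb} = (S_{ab}/S_{0b}) S_{eb} for all e ∈ Φ. Moreover the simultaneous eigenspaces are one-dimensional in the following sense: if b, c ∈ Φ satisfy S_{ab}/S_{0b} = S_{ac}/S_{0c} for all a ∈ Φ, then b = c. -/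
open scoped BigOperators
open Complex

/-- Each column of `S` is a simultaneous eigenvector of the fusion matrices
`(N_a)_{e c} = N a e c`, with eigenvalue `S a b / S 0 b`; and the simultaneous eigenspaces are
one-dimensional: columns with identical eigenvalue ratios coincide. -/
theorem modularData_columns_eigenvectors
    {Φ : Type} [Fintype Φ] [DecidableEq Φ] (M : ModularData Φ) :
    (∀ a b e, ∑ c, (M.N a e c : ℂ) * M.S c b = (M.S a b / M.S M.zero b) * M.S e b) ∧
    (∀ b c, (∀ a, M.S a b / M.S M.zero b = M.S a c / M.S M.zero c) → b = c) := by
  have h0 : ∀ d, M.S M.zero d ≠ 0 := by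
    intro d h
    have := (M.S_zero_pos d).2
    rw [h] at this
    simp at this
  have horth : ∀ d b, ∑ c, (starRingEnd ℂ) (M.S c d) * M.S c b = if d = b then 1 else 0 := by
    intro d b
    have hu : M.S.conjTranspose * M.S = 1 := mul_eq_one_comm.mp M.S_unitary
    have h := congrArg (fun A : Matrix Φ Φ ℂ => A d b) hu
    simpa [Matrix.mul_apply, Matrix.one_apply] using h
  refine ⟨?_, ?_⟩
  · intro a b e
    have h1 : ∀ c, (M.N a e c : ℂ) * M.S c b =
        ∑ d, M.S a d * M.S e d / M.S M.zero d * ((starRingEnd ℂ) (M.S c d) * M.S c b) := by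
      intro c
      rw [M.verlinde, Finset.sum_mul]
      refine Finset.sum_congr rfl fun d _ => ?_
      ring
    simp_rw [h1]
    rw [Finset.sum_comm]
    simp_rw [← Finset.mul_sum, horth]
    simp only [mul_ite, mul_one, mul_zero, Finset.sum_ite_eq', Finset.mem_univ, if_true]
    ring
  · intro b c h
    by_contra hbc
    have h2 : ∀ a, M.S a c = M.S M.zero c / M.S M.zero b * M.S a b := by
      intro a
      have h3 := h a
      have hb := h0 b
      have hc := h0 c
      rw [div_eq_div_iff hb hc] at h3
      rw [div_mul_eq_mul_div, eq_div_iff hb, ← h3]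
      ring
    have h4 := horth b c
    rw [if_neg hbc] at h4
    have h5 : ∑ a, (starRingEnd ℂ) (M.S a b) * M.S a c =
        M.S M.zero c / M.S M.zero b * ∑ a, (starRingEnd ℂ) (M.S a b) * M.S a b := by
      rw [Finset.mul_sum]
      refine Finset.sum_congr rfl fun a _ => ?_
      rw [h2 a]
      ring
    rw [h5, horth b b, if_pos rfl, mul_one] at h4
    exact div_ne_zero (h0 c) (h0 b) h4
end

section
/- Let (S,T) be modular data on Φ, let j ∈ Φ be a unit (S_{j0} = S_{00}), and let J be the associated permutation of Φ with J0 = j and φ_j : Φ → ℂ the associated phase, so that S_{Ja,b} = φ_j(b) S_{ab} for all a, b. Then: T_{Ja,Ja} · conj(T_{aa}) = conj(φ_j(a)) · T_{jj} · conj(T_{00}) for all a ∈ Φ; (T_{jj} · conj(T_{00}))² = conj(φ_j(j)); and if n is the order of the permutation J, then (T_{jj} · conj(T_{00}))^{2n} = 1, and furthermore (T_{jj} · conj(T_{00}))ⁿ = 1 when n is odd. -/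
open scoped BigOperators
open Complex

/-- Let `j` be a unit with associated permutation `J` (with `J 0 = j`) and
phase `φ_j` (so `S_{Ja,b} = φ_j(b) S_{ab}`). Then
`T_{Ja,Ja} conj(T_{aa}) = conj(φ_j(a)) T_{jj} conj(T_{00})`,
`(T_{jj} conj(T_{00}))² = conj(φ_j(j))`, `(T_{jj} conj(T_{00}))^{2n} = 1` where `n` is the
order of `J`, and `(T_{jj} conj(T_{00}))ⁿ = 1` when `n` is odd. -/
theorem modularData_unit_T_relations
    {Φ : Type} [Fintype Φ] [DecidableEq Φ] (M : ModularData Φ)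
    (j : Φ) (hj : M.S j M.zero = M.S M.zero M.zero)
    (J : Equiv.Perm Φ) (hJ0 : J M.zero = j)
    (φ : Φ → ℂ) (hφ : ∀ a b, M.S (J a) b = φ b * M.S a b) :
    (∀ a, M.T (J a) (J a) * (starRingEnd ℂ) (M.T a a) =
      (starRingEnd ℂ) (φ a) * (M.T j j * (starRingEnd ℂ) (M.T M.zero M.zero))) ∧
    (M.T j j * (starRingEnd ℂ) (M.T M.zero M.zero)) ^ 2 = (starRingEnd ℂ) (φ j) ∧
    (M.T j j * (starRingEnd ℂ) (M.T M.zero M.zero)) ^ (2 * orderOf J) = 1 ∧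
    (Odd (orderOf J) →
      (M.T j j * (starRingEnd ℂ) (M.T M.zero M.zero)) ^ (orderOf J) = 1) := by
  classical
  obtain ⟨z, S, T, N, hU, hsymm, hdiag, hord, hpos, hrel, _hver⟩ := M
  simp only at hj hJ0 hφ ⊢
  obtain ⟨t, rfl⟩ : ∃ t, T = Matrix.diagonal t := by
    refine ⟨fun a => T a a, ?_⟩
    ext a b
    by_cases h : a = b
    · subst h; simp
    · simp [h, hdiag a b h]
  simp only [Matrix.diagonal_apply_eq]
  have ht : ∀ a, t a * (starRingEnd ℂ) (t a) = 1 := by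
    obtain ⟨m, hm, hT⟩ := hord
    intro a
    rw [Matrix.diagonal_pow] at hT
    have h1 := congrFun (congrFun hT a) a
    simp only [Matrix.diagonal_apply_eq, Matrix.one_apply_eq, Pi.pow_apply] at h1
    have h2 := Complex.norm_eq_one_of_pow_eq_one h1 hm.ne'
    rw [Complex.mul_conj, Complex.normSq_eq_norm_sq, h2]; simp
  have hS0 : ∀ a, S z a ≠ 0 := by
    intro a h
    have := (hpos a).2
    rw [h] at this
    simp at this
  have hS0' : ∀ a, S a z ≠ 0 := fun a => by rw [hsymm]; exact hS0 a
  have hU' : S.conjTranspose * S = 1 := mul_eq_one_comm.mp hU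
  -- the basic relation
  have hTSTST : Matrix.diagonal t * (S * Matrix.diagonal t * S) * Matrix.diagonal t = S := by
    have h : S * (Matrix.diagonal t * (S * Matrix.diagonal t * S) * Matrix.diagonal t) = S * S := by
      rw [← pow_two, hrel]; simp only [pow_succ, pow_zero, one_mul, Matrix.mul_assoc]
    have h2 := congrArg (fun X => S.conjTranspose * X) h
    simpa only [← Matrix.mul_assoc, hU', Matrix.one_mul] using h2
  have key : ∀ a b, t a * (∑ c, S a c * t c * S c b) * t b = S a b := by
    intro a b
    have h := congrFun (congrFun hTSTST a) b
    rw [Matrix.mul_diagonal, Matrix.diagonal_mul, Matrix.mul_apply] at h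
    simpa only [Matrix.mul_diagonal] using h
  have hφ' : ∀ a b, S a (J b) = φ a * S a b := fun a b => by
    rw [hsymm, hφ, hsymm]
  have hφ0 : φ z = 1 := by
    have h := hφ z z
    rw [hJ0, hj] at h
    exact (mul_right_cancel₀ (hS0 z) (by rw [one_mul]; exact h)).symm
  have hne : ∀ a, t a ≠ 0 := fun a h => by have := ht a; simp [h] at this
  -- both shifted sums agree
  have hA : ∀ a, t a * t (J z) = φ a * t z * t (J a) := by
    intro a
    have h1 := key (J a) z
    have h2 := key a (J z)
    have e : ∑ c, S (J a) c * t c * S c z = ∑ c, S a c * t c * S c (J z) := by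
      refine Finset.sum_congr rfl fun c _ => ?_
      rw [hφ, hφ']; ring
    rw [e, hφ, hφ0] at h1
    rw [hφ'] at h2
    apply mul_right_cancel₀ (hS0' a)
    linear_combination (-(t a * t (J z))) * h1 + t z * t (J a) * h2
  -- phases
  have hpow : ∀ (k : ℕ) a b, S ((J ^ k) a) b = φ b ^ k * S a b := by
    intro k
    induction k with
    | zero => intro a b; simp
    | succ k ih =>
      intro a b
      rw [pow_succ', Equiv.Perm.mul_apply, hφ, ih]; ring
  have hn : 0 < orderOf J := orderOf_pos J
  have hφn : ∀ b, φ b ^ orderOf J = 1 := by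
    intro b
    have h := hpow (orderOf J) z b
    rw [pow_orderOf_eq_one] at h
    exact (mul_right_cancel₀ (hS0 b) (by rw [one_mul]; exact h)).symm
  have hφc : ∀ b, φ b * (starRingEnd ℂ) (φ b) = 1 := by
    intro b
    have h2 := Complex.norm_eq_one_of_pow_eq_one (hφn b) hn.ne'
    rw [Complex.mul_conj, Complex.normSq_eq_norm_sq, h2]; simp
  have hφJ : ∀ a, φ (J a) = φ j * φ a := by
    intro a
    have h1 := hφ z (J a)
    rw [hφ', hφ', hφ0, hJ0, hsymm j a, ← hJ0, hφ', hJ0] at h1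
    apply mul_right_cancel₀ (hS0 a)
    rw [hsymm a z] at h1
    linear_combination -h1
  have first : ∀ a, t (J a) * (starRingEnd ℂ) (t a) =
      (starRingEnd ℂ) (φ a) * (t j * (starRingEnd ℂ) (t z)) := by
    intro a
    have h := hA a
    rw [hJ0] at h
    have e1 := ht a
    have e2 := ht z
    have e3 := hφc a
    generalize (starRingEnd ℂ) (t a) = ta' at *
    generalize (starRingEnd ℂ) (t z) = tz' at *
    generalize (starRingEnd ℂ) (φ a) = p' at *
    linear_combination (-(ta' * tz' * p')) * h + (p' * t j * tz') * e1
      - (t (J a) * ta') * e2 - (t (J a) * ta' * t z * tz') * e3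
  -- charge conjugation
  have hcomm : S ^ 2 * Matrix.diagonal t = Matrix.diagonal t * S ^ 2 := by
    have h : S * (S ^ 2 * Matrix.diagonal t) = S * (Matrix.diagonal t * S ^ 2) := by
      have h1 : S ^ 2 * (S * Matrix.diagonal t) = (S * Matrix.diagonal t) * S ^ 2 := by
        rw [hrel]; simp only [pow_succ, pow_zero, one_mul, Matrix.mul_assoc]
      rw [← Matrix.mul_assoc S (Matrix.diagonal t), ← h1]
      simp only [pow_two, Matrix.mul_assoc]
    have h2 := congrArg (fun X => S.conjTranspose * X) h
    simpa only [← Matrix.mul_assoc, hU', Matrix.one_mul] using h2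
  obtain ⟨a, ha⟩ : ∃ a, J a = z := J.surjective z
  have haj : t a = t j := by
    have h := congrFun (congrFun hcomm a) j
    rw [Matrix.mul_diagonal, Matrix.diagonal_mul] at h
    have hne0 : (S ^ 2) a j ≠ 0 := by
      rw [pow_two, Matrix.mul_apply]
      have e : ∑ c, S a c * S c j = ∑ c, S z c * S z c := by
        refine Finset.sum_congr rfl fun c _ => ?_
        rw [← hJ0, hφ', hsymm c z]
        have hz : S z c = φ c * S a c := by rw [← hφ, ha]
        linear_combination (-S z c) * hz
      rw [e]
      intro h0
      have h1 := congrArg Complex.re h0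
      rw [Complex.re_sum] at h1
      have : 0 < ∑ c, (S z c * S z c).re := by
        refine Finset.sum_pos (fun c _ => ?_) ⟨z, Finset.mem_univ _⟩
        rw [Complex.mul_re, (hpos c).1]
        have := (hpos c).2
        nlinarith [mul_pos this this]
      rw [h1] at this
      simp at this
    exact (mul_left_cancel₀ hne0 (by rw [h]; ring)).symm
  have second : (t j * (starRingEnd ℂ) (t z)) ^ 2 = (starRingEnd ℂ) (φ j) := by
    have h := hA a
    have h' := hφJ a
    rw [ha, hφ0] at h'
    rw [ha, hJ0, haj] at h
    have e2 := ht z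
    have e3 := hφc j
    generalize (starRingEnd ℂ) (t z) = tz' at *
    generalize (starRingEnd ℂ) (φ j) = p' at *
    have hpa : φ a = p' := by linear_combination (-p') * h' - φ a * e3
    rw [hpa] at h
    linear_combination tz' ^ 2 * h + p' * (t z * tz' + 1) * e2
  have third : (t j * (starRingEnd ℂ) (t z)) ^ (2 * orderOf J) = 1 := by
    rw [pow_mul, second, ← map_pow, hφn, map_one]
  refine ⟨first, second, third, ?_⟩
  rintro ⟨m, hm⟩
  set x := t j * (starRingEnd ℂ) (t z) with hx
  have hφk : ∀ k : ℕ, φ ((J ^ k) z) = φ j ^ k := by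
    intro k
    induction k with
    | zero => simp [hφ0]
    | succ k ih => rw [pow_succ', Equiv.Perm.mul_apply, hφJ, ih]; ring
  have htk : ∀ k : ℕ, t ((J ^ k) z) = t z * x ^ (k ^ 2) := by
    intro k
    induction k with
    | zero => simp
    | succ k ih =>
      have h := first ((J ^ k) z)
      rw [hφk, map_pow, ← second] at h
      have e := ht ((J ^ k) z)
      rw [pow_succ', Equiv.Perm.mul_apply]
      have : t (J ((J ^ k) z)) = t ((J ^ k) z) * ((x ^ 2) ^ k * x) := by
        linear_combination t ((J ^ k) z) * h - t (J ((J ^ k) z)) * e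
      rw [this, ih]; ring
  have h := htk (orderOf J)
  rw [pow_orderOf_eq_one] at h
  have h1 : x ^ (orderOf J ^ 2) = 1 :=
    (mul_left_cancel₀ (hne z) (by rw [mul_one]; exact h)).symm
  have h2 : orderOf J ^ 2 = 2 * orderOf J * m + orderOf J := by
    rw [pow_two]; nth_rw 2 [hm]; ring
  rw [h2, pow_add, pow_mul, third, one_pow, one_mul] at h1
  exact h1
end
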